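/- arXiv:1212.5158 — 5 statements merged into one kernel-verified Lean document; each statement's English description precedes it below -/
import Mathlib

section
/- Let h = (h_1,…,h_n) ∈ (ℂ*)^n and let θ_h be the ℂ-algebra automorphism of A = ℂ[x_1,…,x_n] determined by θ_h(x_j) = h_j x_j for 1 ≤ j ≤ n. Suppose there exist scalars σ_i, τ_i ∈ ℂ* with θ_h(s_i) = σ_i s_i and θ_h(t_i) = τ_i t_i for 1 ≤ i ≤ n−2, and set ρ(h) = σ_1 τ_1 σ_2 τ_2 ⋯ σ_{n−2} τ_{n−2}. Then θ_h is a Poisson automorphism of A (i.e. θ_h({f,g}) = {θ_h(f), θ_h(g)} for all f, g ∈ A) if and only if ρ(h) = h_1 h_2 ⋯ h_n. -/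
/- STATEMENT 5: For h ∈ (ℂ*)^n, the automorphism θ_h : x_j ↦ h_j x_j of A = ℂ[x_1,…,x_n]
with θ_h(s_i) = σ_i s_i, θ_h(t_i) = τ_i t_i is a Poisson automorphism iff
ρ(h) = σ_1τ_1⋯σ_{n−2}τ_{n−2} equals h_1h_2⋯h_n.  (Here n = m + 2.) -/

noncomputable section
open MvPolynomial

/-- The polynomial algebra `A = ℂ[x_1,…,x_{m+2}]`. -/
abbrev PA (m : ℕ) : Type := MvPolynomial (Fin (m + 2)) ℂ

/-- The rational function field `B = ℂ(x_1,…,x_{m+2})`. -/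
abbrev FB (m : ℕ) : Type := FractionRing (PA m)

/-- The rows of the matrix computing the Poisson bracket on `A`: ∇f, ∇g and, for
each `i`, `t_i²∇(s_i/t_i) = t_i∇s_i − s_i∇t_i`. -/
def pbrRows {m : ℕ} (s t : Fin m → PA m) (f g : PA m) :
    Fin (m + 2) → Fin (m + 2) → PA m :=
  Fin.cons (fun j => pderiv j f)
    (Fin.cons (fun j => pderiv j g)
      (fun k => fun j => t k * pderiv j (s k) - s k * pderiv j (t k)))

/-- The Poisson bracket `{f,g} = (t_1⋯t_m)²·Jac(f,g,s_1/t_1,…,s_m/t_m)` restricted to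
the polynomial algebra `A`. -/
def pbr {m : ℕ} (s t : Fin m → PA m) (f g : PA m) : PA m :=
  Matrix.det (Matrix.of (pbrRows s t f g))

open scoped TensorProduct KaehlerDifferential in
/-- Extension of a derivation from `A` to its fraction field. -/
theorem exists_ext_derivation {m : ℕ} (D : Derivation ℂ (PA m) (FB m)) :
    ∃ E : Derivation ℂ (FB m) (FB m), ∀ p, E (algebraMap (PA m) (FB m) p) = D p := by
  have : Algebra.FormallyEtale (PA m) (FB m) :=
    Algebra.FormallyEtale.of_isLocalization (nonZeroDivisors (PA m))
  let e := KaehlerDifferential.tensorKaehlerEquivOfFormallyEtale ℂ (PA m) (FB m)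
  let L : Ω[FB m⁄ℂ] →ₗ[FB m] FB m :=
    (D.liftKaehlerDifferential.liftBaseChange (FB m)) ∘ₗ e.symm.toLinearMap
  refine ⟨L.compDer (KaehlerDifferential.D ℂ (FB m)), fun p => ?_⟩
  have h1 : e ((1 : FB m) ⊗ₜ KaehlerDifferential.D ℂ (PA m) p) =
      KaehlerDifferential.D ℂ (FB m) (algebraMap (PA m) (FB m) p) := by
    simp [e]
  have h2 : e.symm (KaehlerDifferential.D ℂ (FB m) (algebraMap (PA m) (FB m) p)) =
      (1 : FB m) ⊗ₜ KaehlerDifferential.D ℂ (PA m) p := by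
    rw [← h1, LinearEquiv.symm_apply_apply]
  simp [L, h2]

/-- The field of constants of a derivation. -/
def constField {F : Type*} [Field F] [Algebra ℂ F] (E : Derivation ℂ F F) :
    IntermediateField ℂ F where
  carrier := {x | E x = 0}
  mul_mem' := by
    intro a b ha hb
    simp only [Set.mem_ofPred_eq] at *
    simp [ha, hb]
  add_mem' := by
    intro a b ha hb
    simp only [Set.mem_ofPred_eq] at *
    simp [ha, hb]
  algebraMap_mem' := by
    intro r
    simp
  inv_mem' := by
    intro a ha
    simp only [Set.mem_ofPred_eq] at *
    simp [Derivation.leibniz_inv, ha]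

theorem mem_constField {F : Type*} [Field F] [Algebra ℂ F] (E : Derivation ℂ F F) (x : F) :
    x ∈ constField E ↔ E x = 0 := Iff.rfl

theorem derivation_eq_zero_of_isAlgebraic {F : Type*} [Field F] [Algebra ℂ F]
    (E : Derivation ℂ F F) [Algebra.IsAlgebraic (constField E) F] (x : F) : E x = 0 := by
  have : CharZero (constField E) := inferInstance
  let E' : Derivation (constField E) F F := Derivation.mk'
    { toFun := E
      map_add' := map_add E
      map_smul' := by
        intro c y
        have : E (c : F) = 0 := c.2
        simp [Algebra.smul_def, this] } (by
        intro a b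
        simp)
  change E' x = 0
  have hx : IsIntegral (constField E) x := Algebra.IsIntegral.isIntegral x
  have hsep : IsSeparable (constField E) x := Algebra.IsSeparable.isSeparable _ x
  have h1 := E'.map_aeval (minpoly (constField E) x) x
  rw [minpoly.aeval, map_zero] at h1
  have h2 := hsep.aeval_derivative_ne_zero (minpoly.aeval _ x)
  simpa [h2] using h1.symm

theorem mkDer_apply {m : ℕ} (v : Fin (m + 2) → FB m) (p : PA m) :
    mkDerivation ℂ v p = ∑ j, algebraMap (PA m) (FB m) (pderiv j p) * v j := by
  induction p using MvPolynomial.induction_on with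
  | C a => simp
  | add p q hp hq => simp [hp, hq, add_mul, Finset.sum_add_distrib]
  | mul_X p i hp =>
    simp only [Derivation.leibniz, hp, mkDerivation_X, map_add, smul_eq_mul, map_mul, add_mul,
      Finset.sum_add_distrib, pderiv_X, Algebra.smul_def, Finset.mul_sum]
    congr 1
    · rw [Finset.sum_eq_single i]
      · simp
      · intro b _ hb
        simp [Pi.single_apply, hb.symm]
      · simp
    · exact Finset.sum_congr rfl fun j _ => by ring

theorem exists_basis {m : ℕ} (F : Fin m → FB m) (hind : AlgebraicIndependent ℂ F) :
    ∃ a b : Fin (m + 2), ∃ u : Set (FB m),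
      IsTranscendenceBasis ℂ ((↑) : u → FB m) ∧
      ∀ x ∈ u, x ∈ Set.range F ∨ x = algebraMap (PA m) (FB m) (X a) ∨
        x = algebraMap (PA m) (FB m) (X b) := by
  let Y : Fin (m + 2) → FB m := fun j => algebraMap (PA m) (FB m) (X j)
  have hY : IsTranscendenceBasis ℂ Y := by
    have h0 := IsTranscendenceBasis.mvPolynomial (Fin (m + 2)) ℂ
    have : Algebra.IsAlgebraic (PA m) (FB m) :=
      IsLocalization.isAlgebraic (FB m) (nonZeroDivisors (PA m))
    exact h0.algebraMap_comp
  have := hY.isAlgebraic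
  have : Algebra.IsAlgebraic (Algebra.adjoin ℂ (Set.range F ∪ Set.range Y)) (FB m) :=
    ⟨fun x => (Algebra.IsAlgebraic.isAlgebraic (R := Algebra.adjoin ℂ (Set.range Y))
      x).tower_top_of_subalgebra_le (Algebra.adjoin_mono Set.subset_union_right)⟩
  obtain ⟨u, h1, h2, hu⟩ := exists_isTranscendenceBasis_between (R := ℂ) (Set.range F)
    (Set.range F ∪ Set.range Y) Set.subset_union_left hind.coe_range
  have hc : u.ncard = m + 2 := by
    have := hu.cardinalMk_eq hY
    rw [← Nat.card_coe_set_eq, Nat.card, this]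
    simp
  have hfin : u.Finite := Set.finite_of_ncard_pos (by omega)
  have hF : (Set.range F).ncard = m := by
    rw [← Nat.card_coe_set_eq, Nat.card_range_of_injective hind.injective]
    simp
  have hd : (u \ Set.range F).ncard = 2 := by
    rw [Set.ncard_sdiff h1, hc, hF]
    omega
  obtain ⟨p, q, hpq, he⟩ := Set.ncard_eq_two.mp hd
  have hp : p ∈ u \ Set.range F := by rw [he]; simp
  have hq : q ∈ u \ Set.range F := by rw [he]; simp
  obtain ⟨a, ha⟩ := (h2 hp.1).resolve_left hp.2
  obtain ⟨b, hb⟩ := (h2 hq.1).resolve_left hq.2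
  refine ⟨a, b, u, hu, fun x hx => ?_⟩
  by_cases hxF : x ∈ Set.range F
  · exact Or.inl hxF
  · have : x ∈ u \ Set.range F := ⟨hx, hxF⟩
    rw [he] at this
    right
    rcases this with h | h
    · exact Or.inl (h.trans ha.symm)
    · exact Or.inr (h.trans hb.symm)

theorem exists_pbr_ne_zero {m : ℕ} (s t : Fin m → PA m) (ht : ∀ i, t i ≠ 0)
    (hind : AlgebraicIndependent ℂ
      (fun i => algebraMap (PA m) (FB m) (s i) / algebraMap (PA m) (FB m) (t i))) :
    ∃ f g, pbr s t f g ≠ 0 := by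
  obtain ⟨a, b, u, hu, hux⟩ := exists_basis _ hind
  refine ⟨X a, X b, fun h0 => ?_⟩
  let M := (Matrix.of (pbrRows s t (X a) (X b))).map (algebraMap (PA m) (FB m))
  have hM : M.det = 0 := by
    have := congrArg (algebraMap (PA m) (FB m)) h0
    rw [pbr, RingHom.map_det, map_zero] at this
    exact this
  obtain ⟨v, hv, hMv⟩ := Matrix.exists_mulVec_eq_zero_iff.mpr hM
  obtain ⟨E, hE⟩ := exists_ext_derivation (mkDerivation ℂ v)
  have key : ∀ p, E (algebraMap (PA m) (FB m) p) =
      ∑ j, algebraMap (PA m) (FB m) (pderiv j p) * v j := fun p => by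
    rw [hE, mkDer_apply]
  have ha : E (algebraMap (PA m) (FB m) (X a)) = 0 := by
    rw [key]
    have := congrFun hMv 0
    simpa [M, Matrix.mulVec, dotProduct, pbrRows] using this
  have hb : E (algebraMap (PA m) (FB m) (X b)) = 0 := by
    rw [key]
    have := congrFun hMv (Fin.succ 0)
    simpa only [M, Matrix.mulVec, dotProduct, pbrRows, Matrix.map_apply, Matrix.of_apply,
      Fin.cons_succ, Fin.cons_zero, Pi.zero_apply] using this
  have hF : ∀ k, E (algebraMap (PA m) (FB m) (s k) / algebraMap (PA m) (FB m) (t k)) = 0 := by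
    intro k
    have h1 := congrFun hMv (Fin.succ (Fin.succ k))
    simp only [M, Matrix.mulVec, dotProduct, pbrRows, Matrix.map_apply, Matrix.of_apply,
      Fin.cons_succ, map_sub, map_mul, sub_mul, Finset.sum_sub_distrib, mul_assoc,
      ← Finset.mul_sum, ← key] at h1
    rw [Derivation.leibniz_div]
    simp only [smul_eq_mul]
    rw [h1]
    simp
  have hle : IntermediateField.adjoin ℂ (Set.range ((↑) : u → FB m)) ≤ constField E := by
    rw [IntermediateField.adjoin_le_iff]
    rintro _ ⟨⟨x, hx⟩, rfl⟩
    change E x = 0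
    rcases hux x hx with ⟨k, rfl⟩ | rfl | rfl
    · exact hF k
    · exact ha
    · exact hb
  have := hu.isAlgebraic_field
  have : Algebra.IsAlgebraic (constField E) (FB m) :=
    ⟨fun x => IsAlgebraic.tower_top_of_subalgebra_le
      (A := (IntermediateField.adjoin ℂ (Set.range ((↑) : u → FB m))).toSubalgebra)
      (B := (constField E).toSubalgebra) hle
      (Algebra.IsAlgebraic.isAlgebraic
        (R := IntermediateField.adjoin ℂ (Set.range ((↑) : u → FB m))) x)⟩
  apply hv
  funext j
  have := derivation_eq_zero_of_isAlgebraic E (algebraMap (PA m) (FB m) (X j))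
  rwa [hE, mkDerivation_X] at this

theorem pderiv_theta {m : ℕ} (h : Fin (m + 2) → ℂ) (j : Fin (m + 2)) (f : PA m) :
    pderiv j (aeval (fun j => C (h j) * X j : Fin (m + 2) → PA m) f) =
      C (h j) * aeval (fun j => C (h j) * X j : Fin (m + 2) → PA m) (pderiv j f) := by
  induction f using MvPolynomial.induction_on with
  | C a => simp [algebraMap_eq]
  | add p q hp hq => rw [map_add, map_add, map_add, map_add, hp, hq, mul_add]
  | mul_X p i hp =>
    simp only [map_mul, aeval_X, Derivation.leibniz, hp, smul_eq_mul, map_add, pderiv_X, pderiv_C]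
    by_cases hij : i = j
    · subst hij
      simp
      ring
    · simp [Pi.single_apply, hij, Ne.symm hij]
      ring

theorem pbr_theta {m : ℕ} (s t : Fin m → PA m) (h : Fin (m + 2) → ℂ)
    (θ : PA m →ₐ[ℂ] PA m) (hθ : θ = aeval (fun j => C (h j) * X j))
    (σ τ : Fin m → ℂ)
    (hs : ∀ i, θ (s i) = C (σ i) * s i)
    (htt : ∀ i, θ (t i) = C (τ i) * t i) (f g : PA m) :
    C (∏ i, σ i * τ i) * pbr s t (θ f) (θ g) = C (∏ j, h j) * θ (pbr s t f g) := by
  have hd : ∀ j p, pderiv j (θ p) = C (h j) * θ (pderiv j p) := by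
    intro j p
    rw [hθ]
    exact pderiv_theta h j p
  let c : Fin (m + 2) → PA m := Fin.cons 1 (Fin.cons 1 (fun k => C (σ k * τ k)))
  have hmat : Matrix.diagonal c * Matrix.of (pbrRows s t (θ f) (θ g)) =
      (Matrix.of (pbrRows s t f g)).map θ * Matrix.diagonal (fun j => C (h j)) := by
    ext1 i j
    rw [Matrix.diagonal_mul, Matrix.mul_diagonal]
    simp only [Matrix.map_apply, Matrix.of_apply]
    refine Fin.cases ?_ (fun i => Fin.cases ?_ (fun k => ?_) i) i
    · simp only [c, pbrRows, Fin.cons_zero, hd]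
      ring
    · simp only [c, pbrRows, Fin.cons_zero, Fin.cons_succ, hd]
      ring
    · have e1 := hd j (s k)
      have e2 := hd j (t k)
      rw [hs, Derivation.leibniz, pderiv_C] at e1
      rw [htt, Derivation.leibniz, pderiv_C] at e2
      simp only [smul_eq_mul, mul_zero, add_zero] at e1 e2
      simp only [c, pbrRows, Fin.cons_succ, map_sub, map_mul, hs, htt]
      linear_combination (C (τ k) * t k) * e1 - (C (σ k) * s k) * e2
  have h2 := congrArg Matrix.det hmat
  rw [Matrix.det_mul, Matrix.det_mul, Matrix.det_diagonal, Matrix.det_diagonal] at h2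
  have h3 : θ (pbr s t f g) = ((Matrix.of (pbrRows s t f g)).map θ).det := by
    rw [pbr, AlgHom.map_det]
    rfl
  have h4 : ∏ i, c i = C (∏ i, σ i * τ i) := by
    simp [c, Fin.prod_univ_succ]
  rw [h3, map_prod C h, mul_comm (∏ j, C (h j)), ← h2, h4]
  rfl

theorem theta_injective {m : ℕ} (h : Fin (m + 2) → ℂ) (hh : ∀ j, h j ≠ 0) :
    Function.Injective (aeval (R := ℂ) (fun j => C (h j) * X j : Fin (m + 2) → PA m)) := by
  set α : PA m →ₐ[ℂ] PA m := aeval (fun j => C (h j) * X j) with hα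
  set β : PA m →ₐ[ℂ] PA m := aeval (fun j => C (h j)⁻¹ * X j) with hβ
  have hl : β.comp α = AlgHom.id ℂ (PA m) := by
    apply MvPolynomial.algHom_ext
    intro j
    have hC : β (C (h j)) = C (h j) := by
      rw [← algebraMap_eq]
      exact β.commutes _
    rw [AlgHom.comp_apply, hα, aeval_X, map_mul, hC, hβ, aeval_X, ← mul_assoc, ← C_mul,
      mul_inv_cancel₀ (hh j), C_1, one_mul, AlgHom.id_apply]
  intro x y hxy
  have h1 : (β.comp α) x = (β.comp α) y := by
    rw [AlgHom.comp_apply, AlgHom.comp_apply, hxy]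
  rwa [hl] at h1

theorem statement_5 {m : ℕ} (hm : 1 ≤ m)
    (s t : Fin m → PA m)
    (ht : ∀ i, t i ≠ 0)
    (hcop : ∀ i, ∀ d : PA m, d ∣ s i → d ∣ t i → IsUnit d)
    (hind : AlgebraicIndependent ℂ
      (fun i => algebraMap (PA m) (FB m) (s i) / algebraMap (PA m) (FB m) (t i)))
    (h : Fin (m + 2) → ℂ) (hh : ∀ j, h j ≠ 0)
    (θ : PA m →ₐ[ℂ] PA m) (hθ : θ = aeval (fun j => C (h j) * X j))
    (σ τ : Fin m → ℂ) (hσ : ∀ i, σ i ≠ 0) (hτ : ∀ i, τ i ≠ 0)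
    (hs : ∀ i, θ (s i) = C (σ i) * s i)
    (htt : ∀ i, θ (t i) = C (τ i) * t i) :
    (∀ f g : PA m, θ (pbr s t f g) = pbr s t (θ f) (θ g)) ↔
      (∏ i, σ i * τ i) = ∏ j, h j := by
  have key := pbr_theta s t h θ hθ σ τ hs htt
  constructor
  · intro H
    obtain ⟨f, g, hfg⟩ := exists_pbr_ne_zero s t ht hind
    have hinj : Function.Injective θ := by
      rw [hθ]
      exact theta_injective h hh
    have h1 : θ (pbr s t f g) ≠ 0 := fun h0 => hfg (hinj (by rw [h0, map_zero]))
    have h2 := key f g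
    rw [← H] at h2
    exact C_injective _ _ (mul_right_cancel₀ h1 h2)
  · intro H f g
    have h2 := key f g
    rw [H] at h2
    have h3 : (C (∏ j, h j) : PA m) ≠ 0 := by
      rw [Ne, C_eq_zero]
      exact Finset.prod_ne_zero_iff.mpr fun j _ => hh j
    exact (mul_left_cancel₀ h3 h2).symm

end
end

section
/- Let γ be dense, let I be an ideal of C_γ, and let Q be a prime ideal of A_γ that is minimal over the extended ideal I·A_γ. Then Q is a Poisson prime ideal of A_γ, i.e. {q, r} ∈ Q for all q ∈ Q and r ∈ A_γ. -/
/- STATEMENT 8: Let γ be dense, I an ideal of C_γ, and Q a prime ideal of A_γ minimal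
over I·A_γ.  Then Q is a Poisson prime ideal of A_γ. -/

set_option synthInstance.maxHeartbeats 1000000
set_option maxHeartbeats 1000000

noncomputable section
open MvPolynomial

/-- `D` is the family of partial derivatives `∂/∂x_j` extended to the rational function
field. -/
def IsPartialDerivs {m : ℕ} (D : Fin (m + 2) → Derivation ℂ (FB m) (FB m)) : Prop :=
  ∀ (j : Fin (m + 2)) (p : PA m),
    D j (algebraMap (PA m) (FB m) p) = algebraMap (PA m) (FB m) (pderiv j p)

/-- The Jacobian determinant `Jac(b_1,…,b_n) = det(∂_j b_i)`. -/
def Jac {m : ℕ} (D : Fin (m + 2) → Derivation ℂ (FB m) (FB m))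
    (b : Fin (m + 2) → FB m) : FB m :=
  Matrix.det (Matrix.of fun i j => D j (b i))

/-- The Poisson bracket `{f,g} = (t_1⋯t_m)²·Jac(f,g,s_1/t_1,…,s_m/t_m)` on `B`. -/
def brB {m : ℕ} (D : Fin (m + 2) → Derivation ℂ (FB m) (FB m))
    (s t : Fin m → PA m) (f g : FB m) : FB m :=
  algebraMap (PA m) (FB m) ((∏ i, t i) ^ 2) *
    Jac D (Fin.cons f (Fin.cons g
      (fun i => algebraMap (PA m) (FB m) (s i) / algebraMap (PA m) (FB m) (t i))))

/-- The set `S_γ = {s_i : γ_i = 1} ∪ {t_i : δ_i = 1}`. -/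
def Sgam {m : ℕ} (s t : Fin m → PA m) (γ : Fin m → Bool × Bool) : Set (PA m) :=
  {x | ∃ i, (γ i).1 = true ∧ x = s i} ∪ {x | ∃ i, (γ i).2 = true ∧ x = t i}

/-- The localization `A_γ = M_γ⁻¹A`, viewed as a subring of `B`: the subalgebra of `B`
generated by (the image of) `A` together with the inverses of the elements of `S_γ`. -/
def Agam {m : ℕ} (s t : Fin m → PA m) (γ : Fin m → Bool × Bool) : Subalgebra ℂ (FB m) :=
  Algebra.adjoin ℂ
    (Set.range (algebraMap (PA m) (FB m)) ∪
      ((fun x => (algebraMap (PA m) (FB m) x)⁻¹) '' Sgam s t γ))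

/-- `v_i = s_i/t_i` if `δ_i = 1` and `v_i = t_i/s_i` otherwise. -/
def vgam {m : ℕ} (s t : Fin m → PA m) (γ : Fin m → Bool × Bool) (i : Fin m) : FB m :=
  if (γ i).2 then algebraMap (PA m) (FB m) (s i) / algebraMap (PA m) (FB m) (t i)
  else algebraMap (PA m) (FB m) (t i) / algebraMap (PA m) (FB m) (s i)

/-- `C_γ`, the ℂ-subalgebra generated by `v_1,…,v_m`. -/
def Cgam {m : ℕ} (s t : Fin m → PA m) (γ : Fin m → Bool × Bool) : Subalgebra ℂ (FB m) :=
  Algebra.adjoin ℂ (Set.range (vgam s t γ))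

theorem derivation_iterate_mul {R : Type*} [CommRing R] [Algebra ℂ R] (d : Derivation ℂ R R)
    (n : ℕ) (a b : R) :
    d^[n] (a * b) =
      ∑ ij ∈ Finset.HasAntidiagonal.antidiagonal n, n.choose ij.1 • (d^[ij.1] a * d^[ij.2] b) := by
  induction n with
  | zero => simp
  | succ n ih =>
    rw [Finset.sum_antidiagonal_choose_succ_nsmul (M := R) (fun i j => d^[i] a * d^[j] b) n]
    simp only [Function.iterate_succ_apply', ih, map_sum, map_nsmul, Derivation.leibniz,
      smul_add, Finset.sum_add_distrib, smul_eq_mul, add_right_inj]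
    refine Finset.sum_congr rfl fun ⟨i, j⟩ hij => ?_
    rw [n.choose_symm_of_eq_add (Finset.HasAntidiagonal.mem_antidiagonal.1 hij).symm, mul_comm]

theorem derivation_iterate_zero {R : Type*} [CommRing R] [Algebra ℂ R] (d : Derivation ℂ R R)
    (n : ℕ) : d^[n] 0 = 0 := by
  induction n with
  | zero => rfl
  | succ n ih => rw [Function.iterate_succ_apply, map_zero, ih]

theorem derivation_iterate_add {R : Type*} [CommRing R] [Algebra ℂ R] (d : Derivation ℂ R R)
    (n : ℕ) (a b : R) : d^[n] (a + b) = d^[n] a + d^[n] b := by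
  induction n generalizing a b with
  | zero => rfl
  | succ n ih => rw [Function.iterate_succ_apply, map_add, ih]; rfl

/-- The largest `d`-stable ideal contained in `Q`. -/
def diffCore {R : Type*} [CommRing R] [Algebra ℂ R] (d : Derivation ℂ R R) (Q : Ideal R) :
    Ideal R where
  carrier := {a | ∀ n : ℕ, d^[n] a ∈ Q}
  zero_mem' := fun n => by rw [derivation_iterate_zero]; exact Q.zero_mem
  add_mem' := fun {a b} ha hb n => by
    rw [derivation_iterate_add]; exact Q.add_mem (ha n) (hb n)
  smul_mem' := fun c x hx n => by
    rw [smul_eq_mul, derivation_iterate_mul]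
    exact Q.sum_mem fun ij _ => nsmul_mem (Q.mul_mem_left _ (hx _)) _

theorem diffCore_isPrime {R : Type*} [CommRing R] [Algebra ℂ R] (d : Derivation ℂ R R)
    (Q : Ideal R) (hQ : Q.IsPrime) : (diffCore d Q).IsPrime := by
  classical
  constructor
  · intro h
    apply hQ.ne_top
    rw [Ideal.eq_top_iff_one] at h ⊢
    exact h 0
  · intro a b hab
    by_contra hcon
    rw [not_or] at hcon
    obtain ⟨ha, hb⟩ := hcon
    have ha' : ∃ n : ℕ, d^[n] a ∉ Q := by
      by_contra h; push Not at h; exact ha h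
    have hb' : ∃ n : ℕ, d^[n] b ∉ Q := by
      by_contra h; push Not at h; exact hb h
    have hk := Nat.find_spec ha'
    have hl := Nat.find_spec hb'
    have hk' : ∀ i < Nat.find ha', d^[i] a ∈ Q := fun i hi => not_not.1 (Nat.find_min ha' hi)
    have hl' : ∀ i < Nat.find hb', d^[i] b ∈ Q := fun i hi => not_not.1 (Nat.find_min hb' hi)
    generalize Nat.find ha' = k at *
    generalize Nat.find hb' = l at *
    have h := hab (k + l)
    rw [derivation_iterate_mul, ← Finset.add_sum_erase _ _
      (show ((k, l) : ℕ × ℕ) ∈ Finset.HasAntidiagonal.antidiagonal (k + l) by simp)] at h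
    have h2 : ∑ ij ∈ (Finset.HasAntidiagonal.antidiagonal (k + l)).erase (k, l),
        (k + l).choose ij.1 • (d^[ij.1] a * d^[ij.2] b) ∈ Q := by
      refine Q.sum_mem fun ij hij => nsmul_mem ?_ _
      rw [Finset.mem_erase, Finset.HasAntidiagonal.mem_antidiagonal] at hij
      obtain ⟨hne, hs⟩ := hij
      rcases lt_trichotomy ij.1 k with h1 | h1 | h1
      · exact Q.mul_mem_right _ (hk' _ h1)
      · exact absurd (Prod.ext h1 (by simp only; omega)) hne
      · exact Q.mul_mem_left _ (hl' _ (by omega))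
    have h3 := (Ideal.add_mem_iff_left Q h2).1 h
    have hc : ((k + l).choose k : ℂ) ≠ 0 := by
      exact_mod_cast (Nat.choose_pos (Nat.le_add_right k l)).ne'
    have h4 : d^[k] a * d^[l] b ∈ Q := by
      have h5 := Q.mul_mem_left (algebraMap ℂ R (((k + l).choose k : ℂ)⁻¹)) h3
      rw [nsmul_eq_mul, ← mul_assoc, ← map_natCast (algebraMap ℂ R), ← map_mul,
        inv_mul_cancel₀ hc, map_one, one_mul] at h5
      exact h5
    rcases hQ.mem_or_mem h4 with h | h
    · exact hk h
    · exact hl h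

theorem minimalPrime_stable {R : Type*} [CommRing R] [Algebra ℂ R] (d : Derivation ℂ R R)
    (J Q : Ideal R) (hQ : Q ∈ J.minimalPrimes) (hJ : J ≤ diffCore d Q) (q : R) (hq : q ∈ Q) :
    d q ∈ Q := by
  have hle : diffCore d Q ≤ Q := fun x hx => hx 0
  have := hQ.2 ⟨diffCore_isPrime d Q hQ.1.1, hJ⟩ hle
  exact this hq 1

theorem det_mem_subalgebra {K : Type*} [Field K] [Algebra ℂ K] (S : Subalgebra ℂ K) {n : ℕ}
    (M : Matrix (Fin n) (Fin n) K) (h : ∀ i j, M i j ∈ S) : M.det ∈ S := by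
  rw [Matrix.det_apply]
  refine sum_mem fun σ _ => ?_
  rw [Units.smul_def]
  exact zsmul_mem (prod_mem fun i _ => h _ _) _

/-- Restriction of a derivation of a field to a stable subalgebra. -/
def restrictDer {K : Type*} [Field K] [Algebra ℂ K] (S : Subalgebra ℂ K) (d : Derivation ℂ K K)
    (h : ∀ x ∈ S, d x ∈ S) : Derivation ℂ S S :=
  Derivation.mk' 
    { toFun := fun x => ⟨d x, h x x.2⟩
      map_add' := fun x y => Subtype.ext (by simp)
      map_smul' := fun c x => Subtype.ext (by simp) }
    (fun a b => Subtype.ext (by simp))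

theorem D_mem_Agam {m : ℕ}
    (D : Fin (m + 2) → Derivation ℂ (FB m) (FB m)) (hD : IsPartialDerivs D)
    (s t : Fin m → PA m) (γ : Fin m → Bool × Bool) (j : Fin (m + 2)) (x : FB m)
    (hx : x ∈ Agam s t γ) : D j x ∈ Agam s t γ := by
  have hA : ∀ p : PA m, algebraMap (PA m) (FB m) p ∈ Agam s t γ := fun p =>
    Algebra.subset_adjoin (Or.inl ⟨p, rfl⟩)
  induction hx using Algebra.adjoin_induction with
  | mem x hx =>
    rcases hx with ⟨p, rfl⟩ | ⟨p, hp, rfl⟩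
    · rw [hD]; exact hA _
    · have hi : (algebraMap (PA m) (FB m) p)⁻¹ ∈ Agam s t γ :=
        Algebra.subset_adjoin (Or.inr ⟨p, hp, rfl⟩)
      simp only
      rw [Derivation.leibniz_inv, hD, smul_eq_mul]
      exact mul_mem (neg_mem (pow_mem hi 2)) (hA _)
  | algebraMap r => rw [Derivation.map_algebraMap]; exact zero_mem _
  | add x y hx hy h1 h2 => rw [map_add]; exact add_mem h1 h2
  | mul x y hx hy h1 h2 =>
    rw [Derivation.leibniz, smul_eq_mul, smul_eq_mul]
    exact add_mem (mul_mem hx h2) (mul_mem hy h1)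

theorem brB_mem_Agam {m : ℕ}
    (D : Fin (m + 2) → Derivation ℂ (FB m) (FB m)) (hD : IsPartialDerivs D)
    (s t : Fin m → PA m) (ht : ∀ i, t i ≠ 0) (γ : Fin m → Bool × Bool) (f g : FB m)
    (hf : f ∈ Agam s t γ) (hg : g ∈ Agam s t γ) : brB D s t f g ∈ Agam s t γ := by
  have hA : ∀ p : PA m, algebraMap (PA m) (FB m) p ∈ Agam s t γ := fun p =>
    Algebra.subset_adjoin (Or.inl ⟨p, rfl⟩)
  have hw : algebraMap (PA m) (FB m) ((∏ i, t i) ^ 2) =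
      ∏ i, (Fin.cons 1 (Fin.cons 1 fun i => algebraMap (PA m) (FB m) (t i) ^ 2) :
        Fin (m + 2) → FB m) i := by
    rw [Fin.prod_univ_succ, Fin.prod_univ_succ]
    simp only [Fin.cons_zero, Fin.cons_succ, one_mul]
    rw [map_pow, map_prod, Finset.prod_pow]
  unfold brB Jac
  rw [hw, ← Matrix.det_mul_column]
  refine det_mem_subalgebra _ _ fun i j => ?_
  simp only [Matrix.of_apply]
  refine Fin.cases ?_ (fun i => Fin.cases ?_ (fun i => ?_) i) i
  · simp only [Fin.cons_zero, one_mul]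
    exact D_mem_Agam D hD s t γ j f hf
  · simp only [Fin.cons_zero, Fin.cons_succ, one_mul]
    exact D_mem_Agam D hD s t γ j g hg
  · simp only [Fin.cons_succ]
    have h0 : algebraMap (PA m) (FB m) (t i) ≠ 0 := by
      rw [Ne, IsFractionRing.to_map_eq_zero_iff]; exact ht i
    rw [Derivation.leibniz_div, smul_eq_mul, ← mul_assoc, ← mul_pow, mul_inv_cancel₀ h0, one_pow,
      one_mul, hD, hD, smul_eq_mul, smul_eq_mul]
    exact sub_mem (mul_mem (hA _) (hA _)) (mul_mem (hA _) (hA _))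

theorem exists_ham {m : ℕ}
    (D : Fin (m + 2) → Derivation ℂ (FB m) (FB m)) (s t : Fin m → PA m) (g : FB m) :
    ∃ d : Derivation ℂ (FB m) (FB m), ∀ f, d f = brB D s t f g := by
  refine ⟨∑ j : Fin (m + 2), (algebraMap (PA m) (FB m) ((∏ i, t i) ^ 2) * ((-1) ^ (j : ℕ) *
    Matrix.det (Matrix.of fun (i : Fin (m + 1)) (k : Fin (m + 1)) =>
      D (j.succAbove k) ((Fin.cons g (fun i => algebraMap (PA m) (FB m) (s i) /
        algebraMap (PA m) (FB m) (t i)) : Fin (m + 1) → FB m) i)))) • D j, fun f => ?_⟩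
  unfold brB Jac
  rw [Matrix.det_succ_row_zero, Finset.mul_sum]
  rw [← Derivation.coeFnAddMonoidHom_apply, map_sum, Finset.sum_apply]
  refine Finset.sum_congr rfl fun j _ => ?_
  rw [Derivation.coeFnAddMonoidHom_apply, Derivation.smul_apply, smul_eq_mul]
  have : (Matrix.of fun i k => D k ((Fin.cons f (Fin.cons g
      (fun i => algebraMap (PA m) (FB m) (s i) / algebraMap (PA m) (FB m) (t i))) :
      Fin (m + 2) → FB m) i)).submatrix Fin.succ j.succAbove =
    (Matrix.of fun (i : Fin (m + 1)) (k : Fin (m + 1)) =>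
      D (j.succAbove k) ((Fin.cons g (fun i => algebraMap (PA m) (FB m) (s i) /
        algebraMap (PA m) (FB m) (t i)) : Fin (m + 1) → FB m) i)) := by
    ext i k
    simp [Matrix.submatrix_apply]
  rw [this, Matrix.of_apply, Fin.cons_zero]
  ring

theorem brB_f {m : ℕ}
    (D : Fin (m + 2) → Derivation ℂ (FB m) (FB m)) (s t : Fin m → PA m) (g : FB m) (i : Fin m) :
    brB D s t (algebraMap (PA m) (FB m) (s i) / algebraMap (PA m) (FB m) (t i)) g = 0 := by
  unfold brB Jac
  rw [Matrix.det_zero_of_row_eq (i := 0) (j := i.succ.succ) (Fin.succ_ne_zero _).symm, mul_zero]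
  ext k
  simp only [Matrix.of_apply, Fin.cons_zero, Fin.cons_succ]

theorem der_Cgam {m : ℕ} (d : Derivation ℂ (FB m) (FB m)) (s t : Fin m → PA m)
    (hd : ∀ i, d (algebraMap (PA m) (FB m) (s i) / algebraMap (PA m) (FB m) (t i)) = 0)
    (γ : Fin m → Bool × Bool) (x : FB m) (hx : x ∈ Cgam s t γ) : d x = 0 := by
  induction hx using Algebra.adjoin_induction with
  | mem x hx =>
    obtain ⟨i, rfl⟩ := hx
    unfold vgam
    split_ifs
    · exact hd i
    · rw [← inv_div, Derivation.leibniz_inv, hd, smul_zero]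
  | algebraMap r => exact Derivation.map_algebraMap _ _
  | add x y hx hy h1 h2 => rw [map_add, h1, h2, add_zero]
  | mul x y hx hy h1 h2 => rw [Derivation.leibniz, h1, h2, smul_zero, smul_zero, add_zero]

theorem statement_8 {m : ℕ} (hm : 1 ≤ m)
    (D : Fin (m + 2) → Derivation ℂ (FB m) (FB m)) (hD : IsPartialDerivs D)
    (s t : Fin m → PA m)
    (ht : ∀ i, t i ≠ 0)
    (hcop : ∀ i, ∀ d : PA m, d ∣ s i → d ∣ t i → IsUnit d)
    (hind : AlgebraicIndependent ℂ
      (fun i => algebraMap (PA m) (FB m) (s i) / algebraMap (PA m) (FB m) (t i)))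
    (γ : Fin m → Bool × Bool) (hdense : ∀ i, γ i ≠ (false, false))
    (hsub : Cgam s t γ ≤ Agam s t γ)
    (I : Ideal (Cgam s t γ))
    (Q : Ideal (Agam s t γ))
    (hQ : Q ∈ (Ideal.map (Subalgebra.inclusion hsub) I).minimalPrimes) :
    Q.IsPrime ∧ ∀ q ∈ Q, ∀ r : Agam s t γ,
      ∃ w ∈ Q, brB D s t (q : FB m) (r : FB m) = (w : FB m) := by
  refine ⟨hQ.1.1, fun q hq r => ?_⟩
  obtain ⟨d, hd⟩ := exists_ham D s t (r : FB m)
  have hst : ∀ x ∈ Agam s t γ, d x ∈ Agam s t γ := fun x hx => by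
    rw [hd]; exact brB_mem_Agam D hD s t ht γ x r hx r.2
  refine ⟨restrictDer _ d hst q, ?_, (hd q).symm⟩
  refine minimalPrime_stable (restrictDer _ d hst) _ Q hQ ?_ q hq
  rw [Ideal.map_le_iff_le_comap]
  intro c hc n
  cases n with
  | zero => exact hQ.1.2 (Ideal.mem_map_of_mem _ hc)
  | succ n =>
    have h0 : restrictDer _ d hst (Subalgebra.inclusion hsub c) = 0 :=
      Subtype.ext (der_Cgam d s t (fun i => by rw [hd, brB_f]) γ c c.2)
    have h1 : (restrictDer _ d hst)^[n + 1] (Subalgebra.inclusion hsub c) = 0 := by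
      rw [Function.iterate_succ_apply, h0, derivation_iterate_zero]
    exact h1 ▸ Q.zero_mem

end
end

section
/- Let γ be dense and let Q be a nonzero proper Poisson prime ideal of A_γ. Then Q is a minimal prime ideal over the extended ideal (Q ∩ C_γ)·A_γ. -/
/- STATEMENT 10: Let γ be dense and Q a nonzero proper Poisson prime ideal of A_γ.
Then Q is a minimal prime ideal over the extended ideal (Q ∩ C_γ)·A_γ. -/

set_option synthInstance.maxHeartbeats 1000000
set_option maxHeartbeats 1000000

noncomputable section
open MvPolynomial

theorem aux_chain {C R : Type} [CommRing C] [CommRing R] [Algebra C R] [Algebra ℂ R]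
    (δ : Derivation ℂ R R) (hδ : ∀ c : C, δ (algebraMap C R c) = 0) (x : Fin 2 → R)
    (F : MvPolynomial (Fin 2) C) :
    δ (aeval x F) = ∑ i, aeval x (pderiv i F) * δ (x i) := by
  induction F using MvPolynomial.induction_on with
  | C c => simp [hδ]
  | add p q hp hq => simp [hp, hq, add_mul, Finset.sum_add_distrib]
  | mul_X p i hp =>
    rw [map_mul, aeval_X, Derivation.leibniz, hp]
    simp only [pderiv_mul, map_add, map_mul, aeval_X, add_mul, Finset.sum_add_distrib, smul_eq_mul,
      Finset.mul_sum]
    rw [add_comm]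
    congr 1
    · exact Finset.sum_congr rfl fun j _ => by ring
    · rw [Finset.sum_eq_single i]
      · simp
      · intro j _ hj
        rw [pderiv_X_of_ne hj.symm]; simp
      · simp

theorem aux_indep {C R : Type} [CommRing C] [CommRing R] [Algebra C R] [Algebra ℂ R]
    (Q : Ideal R) (hQ : Q.IsPrime) (f g w : R) (hw : w ∉ Q)
    (δ₁ δ₂ : Derivation ℂ R R) (h₁ : ∀ c : C, δ₁ (algebraMap C R c) = 0)
    (h₂ : ∀ c : C, δ₂ (algebraMap C R c) = 0)
    (hQ₁ : ∀ q ∈ Q, δ₁ q ∈ Q) (hQ₂ : ∀ q ∈ Q, δ₂ q ∈ Q)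
    (h1f : δ₁ f = w) (h1g : δ₁ g = 0) (h2f : δ₂ f = 0) (h2g : δ₂ g = w) (N : ℕ) :
    ∀ F : MvPolynomial (Fin 2) C, (∀ k : Fin 2 →₀ ℕ, N < k.degree → coeff k F = 0) →
      aeval ![f, g] F ∈ Q → ∀ k, algebraMap C R (coeff k F) ∈ Q := by
  have key : ∀ F : MvPolynomial (Fin 2) C, aeval ![f, g] F ∈ Q →
      ∀ i, aeval ![f, g] (pderiv i F) ∈ Q := by
    intro F hF i
    have e1 := hQ₁ _ hF
    have e2 := hQ₂ _ hF
    rw [aux_chain δ₁ h₁] at e1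
    rw [aux_chain δ₂ h₂] at e2
    simp only [Fin.sum_univ_two, Matrix.cons_val_zero, Matrix.cons_val_one, h1f, h1g, h2f, h2g,
      mul_zero, add_zero, zero_add] at e1 e2
    fin_cases i
    · exact (hQ.mem_or_mem e1).resolve_right hw
    · exact (hQ.mem_or_mem e2).resolve_right hw
  have final : ∀ F : MvPolynomial (Fin 2) C, aeval ![f, g] F ∈ Q →
      (∀ k, k ≠ 0 → algebraMap C R (coeff k F) ∈ Q) → ∀ k, algebraMap C R (coeff k F) ∈ Q := by
    intro F hF hk k
    by_cases h0 : k = 0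
    · subst h0
      by_cases hs : (0 : Fin 2 →₀ ℕ) ∈ F.support
      · rw [aeval_def, eval₂_eq', ← Finset.add_sum_erase _ _ hs] at hF
        have : ∑ x ∈ F.support.erase 0,
            algebraMap C R (coeff x F) * ∏ i, (![f, g] : Fin 2 → R) i ^ x i ∈ Q :=
          Q.sum_mem fun x hx => Q.mul_mem_right _ (hk x (Finset.ne_of_mem_erase hx))
        rw [Q.add_mem_iff_left this] at hF
        simpa using hF
      · rw [notMem_support_iff.mp hs]; simp
    · exact hk k h0
  induction N with
  | zero =>
    intro F hd hF
    refine final F hF fun k hk => ?_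
    rw [hd k (by rw [Nat.pos_iff_ne_zero, Ne, Finsupp.degree_eq_zero_iff]; exact hk)]; simp
  | succ N ih =>
    intro F hd hF
    refine final F hF fun k hk => ?_
    obtain ⟨i, hi⟩ : ∃ i, k i ≠ 0 := by
      by_contra! h
      exact hk (Finsupp.ext h)
    have hk' : k - Finsupp.single i 1 + Finsupp.single i 1 = k := by
      ext j
      by_cases hj : j = i
      · subst hj; simp; omega
      · simp [Ne.symm hj]
    have := ih (pderiv i F) (fun l hl => by
      rw [coeff_pderiv, hd, zero_mul]
      simp; exact hl) (key F hF i) (k - Finsupp.single i 1)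
    rw [coeff_pderiv, hk', map_mul] at this
    refine (hQ.mem_or_mem this).resolve_right fun hb => hQ.ne_top ?_
    refine Ideal.eq_top_of_isUnit_mem _ hb ?_
    have hcast : (algebraMap C R) ((((k - Finsupp.single i 1 : Fin 2 →₀ ℕ) i : ℕ) : C) + 1)
        = algebraMap ℂ R (((k - Finsupp.single i 1 : Fin 2 →₀ ℕ) i + 1 : ℕ) : ℂ) := by
      simp
    rw [hcast]
    exact (IsUnit.mk0 _ (Nat.cast_ne_zero.mpr (Nat.succ_ne_zero _))).map _

theorem aux_main {C R : Type} [CommRing C] [CommRing R] [Algebra C R] [Algebra ℂ R]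
    [Algebra ℂ C] [IsScalarTower ℂ C R] [Algebra.FiniteType ℂ R]
    {n : Type} [Fintype n] [DecidableEq n] (x : n → R) (pd : n → R → R)
    (hpd : ∀ (M : Type) [AddCommGroup M] [Module R M] [Module ℂ M] [IsScalarTower ℂ R M]
      (d : Derivation ℂ R M) (r : R),
      d r = ∑ j, pd j r • d (x j))
    (Q : Ideal R) (hQ : Q.IsPrime) (f g w : R) (hw : w ∉ Q)
    (δ₁ δ₂ : Derivation ℂ R R) (h₁ : ∀ c : C, δ₁ (algebraMap C R c) = 0)
    (h₂ : ∀ c : C, δ₂ (algebraMap C R c) = 0)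
    (hQ₁ : ∀ q ∈ Q, δ₁ q ∈ Q) (hQ₂ : ∀ q ∈ Q, δ₂ q ∈ Q)
    (h1f : δ₁ f = w) (h1g : δ₁ g = 0) (h2f : δ₂ f = 0) (h2g : δ₂ g = w)
    (N : Matrix n n R) (hN : N.det = w)
    (hrow : ∀ i, ∃ u y : R, (y = f ∨ y = g ∨ y ∈ Set.range (algebraMap C R)) ∧
      ∀ j, N i j = u * pd j y)
    (P : Ideal R) (hP : P.IsPrime) (hPQ : P ≤ Q)
    (hC : ∀ c : C, algebraMap C R c ∈ Q → algebraMap C R c ∈ P) : Q ≤ P := by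
  intro q hq
  by_contra hqP
  let φ : MvPolynomial (Fin 2) C →ₐ[ℂ] R := (aeval (R := C) ![f, g]).restrictScalars ℂ
  let T : Subalgebra ℂ (R ⧸ P) := ((Ideal.Quotient.mkₐ ℂ P).comp φ).range
  let L := FractionRing (R ⧸ P)
  let K := FractionRing T
  have hinj : Function.Injective (algebraMap T L) := by
    rw [IsScalarTower.algebraMap_eq T (R ⧸ P) L]
    exact (IsFractionRing.injective (R ⧸ P) L).comp Subtype.val_injective
  have : FaithfulSMul T L := (faithfulSMul_iff_algebraMap_injective T L).mpr hinj
  let : Algebra K L := FractionRing.liftAlgebra T L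
  have : IsScalarTower T K L := FractionRing.isScalarTower_liftAlgebra T L
  have : IsScalarTower ℂ K L := by
    refine IsScalarTower.of_algebraMap_eq' ?_
    rw [IsScalarTower.algebraMap_eq ℂ T K, ← RingHom.comp_assoc, ← IsScalarTower.algebraMap_eq T K L,
      ← IsScalarTower.algebraMap_eq ℂ T L]
  have : Algebra.EssFiniteType ℂ L := inferInstance
  have : Algebra.EssFiniteType K L := Algebra.EssFiniteType.of_comp ℂ K L
  have : IsScalarTower ℂ R L := inferInstance
  have hD : ∀ z : L, KaehlerDifferential.D K L z = 0 := by
    let d : Derivation ℂ R (Ω[L⁄K]) :=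
      ((KaehlerDifferential.D K L).restrictScalars ℂ).compAlgebraMap R
    have hdapp : ∀ r, d r = KaehlerDifferential.D K L (algebraMap R L r) := fun r => rfl
    have hdT : ∀ F, d (φ F) = 0 := by
      intro F
      have : algebraMap R L (φ F) = algebraMap K L (algebraMap T K ⟨_, F, rfl⟩) := by
        rw [← IsScalarTower.algebraMap_apply T K L]; rfl
      rw [hdapp, this, Derivation.map_algebraMap]
    have hdx : ∀ j, d (x j) = 0 := by
      have hrow0 : ∀ i, ∑ j, N i j • d (x j) = 0 := by
        intro i
        obtain ⟨u, y, hy, hu⟩ := hrow i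
        have hy0 : d y = 0 := by
          rcases hy with rfl | rfl | ⟨c, rfl⟩
          · simpa [φ] using hdT (X 0)
          · simpa [φ] using hdT (X 1)
          · simpa [φ] using hdT (MvPolynomial.C c)
        simp only [hu, mul_smul, ← Finset.smul_sum]
        rw [← hpd, hy0, smul_zero]
      intro j
      have hdet : w • d (x j) = 0 := by
        have : w • d (x j) = ∑ k, (N.adjugate * N) j k • d (x k) := by
          rw [Matrix.adjugate_mul, hN]
          simp [Matrix.smul_apply, Matrix.one_apply, ite_smul]
        rw [this]
        simp only [Matrix.mul_apply, Finset.sum_smul, mul_smul]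
        rw [Finset.sum_comm]
        simp only [← Finset.smul_sum, hrow0, smul_zero, Finset.sum_const_zero]
      rw [← algebraMap_smul L w] at hdet
      refine (smul_eq_zero.mp hdet).resolve_left fun h0 => ?_
      rw [IsScalarTower.algebraMap_apply R (R ⧸ P) L] at h0
      have h0' := (IsFractionRing.to_map_eq_zero_iff (K := L)).mp h0
      exact hw (hPQ (Ideal.Quotient.eq_zero_iff_mem.mp h0'))
    have hd0 : ∀ r, d r = 0 := fun r => by
      rw [hpd]; simp [hdx]
    intro z
    obtain ⟨a, b, hb, rfl⟩ := IsFractionRing.div_surjective (A := R ⧸ P) z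
    obtain ⟨a, rfl⟩ := Ideal.Quotient.mk_surjective a
    obtain ⟨b, rfl⟩ := Ideal.Quotient.mk_surjective b
    have ha' := hd0 a
    have hb' := hd0 b
    rw [hdapp, IsScalarTower.algebraMap_apply R (R ⧸ P) L] at ha' hb'
    rw [Derivation.leibniz_div]
    simp only [Ideal.Quotient.algebraMap_eq] at ha' hb'
    rw [ha', hb']; simp
  have : Subsingleton (Ω[L⁄K]) := by
    have := KaehlerDifferential.span_range_derivation K L
    have h0 : Set.range (KaehlerDifferential.D K L) ⊆ {0} := by
      rintro _ ⟨z, rfl⟩; exact hD z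
    rw [← Submodule.subsingleton_iff L, ← subsingleton_iff_bot_eq_top, ← this, eq_comm, eq_bot_iff]
    rw [Submodule.span_le]
    exact h0
  have : Algebra.FormallyUnramified K L := ⟨inferInstance⟩
  have : Algebra.IsSeparable K L := Algebra.FormallyUnramified.isSeparable K L
  have hqalg : IsAlgebraic T (Ideal.Quotient.mk P q) := by
    have h1 : IsAlgebraic K (algebraMap (R ⧸ P) L (Ideal.Quotient.mk P q)) :=
      Algebra.IsAlgebraic.isAlgebraic _
    rw [← IsFractionRing.isAlgebraic_iff T K L] at h1
    exact (isAlgebraic_algebraMap_iff (IsFractionRing.injective (R ⧸ P) L)).mp h1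
  have hq0 : Ideal.Quotient.mk P q ≠ 0 := fun h => hqP (Ideal.Quotient.eq_zero_iff_mem.mp h)
  obtain ⟨r, hr, hdvd⟩ := hqalg.exists_nonzero_dvd (mem_nonZeroDivisors_of_ne_zero hq0)
  obtain ⟨_, F, rfl⟩ := r
  obtain ⟨z, hz⟩ := hdvd
  obtain ⟨z, rfl⟩ := Ideal.Quotient.mk_surjective z
  have hz' : Ideal.Quotient.mk P (φ F) = Ideal.Quotient.mk P (q * z) := by
    rw [map_mul]; exact hz
  have hFQ : φ F ∈ Q := by
    have := hPQ (Ideal.Quotient.eq.mp hz')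
    have h2 := Q.add_mem this (Q.mul_mem_right z hq)
    simpa using h2
  have hco := aux_indep Q hQ f g w hw δ₁ δ₂ h₁ h₂ hQ₁ hQ₂ h1f h1g h2f h2g F.totalDegree F
    (fun k hk => coeff_eq_zero_of_totalDegree_lt hk) hFQ
  apply hr
  apply Subtype.ext
  change Ideal.Quotient.mk P (φ F) = 0
  rw [Ideal.Quotient.eq_zero_iff_mem]
  change aeval ![f, g] F ∈ P
  rw [aeval_def, eval₂_eq']
  exact P.sum_mem fun k _ => P.mul_mem_right _ (hC _ (hco k))

theorem der_sum_apply {A M ι : Type} [CommRing A] [Algebra ℂ A] [AddCommGroup M] [Module A M]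
    [Module ℂ M] (S : Finset ι) (d : ι → Derivation ℂ A M) (a : A) :
    (∑ j ∈ S, d j) a = ∑ j ∈ S, d j a := by
  induction S using Finset.cons_induction with
  | empty => simp
  | cons i S hi ih => rw [Finset.sum_cons, Finset.sum_cons, Derivation.add_apply, ih]

/-- Restriction of a derivation to a stable subalgebra. -/
def restrDer {B : Type} [CommRing B] [Algebra ℂ B] (d : Derivation ℂ B B) (S : Subalgebra ℂ B)
    (h : ∀ r ∈ S, d r ∈ S) : Derivation ℂ S S :=
  Derivation.mk'
    { toFun := fun r => ⟨d r, h r r.2⟩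
      map_add' := fun a b => Subtype.ext (by simp)
      map_smul' := fun c a => Subtype.ext (by simp) }
    (fun a b => Subtype.ext (by simp))

theorem restrDer_coe {B : Type} [CommRing B] [Algebra ℂ B] (d : Derivation ℂ B B)
    (S : Subalgebra ℂ B) (h : ∀ r ∈ S, d r ∈ S) (r : S) :
    ((restrDer d S h r : S) : B) = d r := rfl

section conc
variable {m : ℕ}

theorem mem_Agam (s t : Fin m → PA m) (γ : Fin m → Bool × Bool) (p : PA m) :
    algebraMap (PA m) (FB m) p ∈ Agam s t γ :=
  Algebra.subset_adjoin (Or.inl ⟨p, rfl⟩)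

theorem D_mem (D : Fin (m + 2) → Derivation ℂ (FB m) (FB m)) (hD : IsPartialDerivs D)
    (s t : Fin m → PA m) (γ : Fin m → Bool × Bool) (j : Fin (m + 2)) :
    ∀ r ∈ Agam s t γ, D j r ∈ Agam s t γ := by
  intro r hr
  induction hr using Algebra.adjoin_induction with
  | mem x hx =>
    rcases hx with ⟨p, rfl⟩ | ⟨p, hp, rfl⟩
    · rw [hD j p]; exact mem_Agam s t γ _
    · have hinv : (algebraMap (PA m) (FB m) p)⁻¹ ∈ Agam s t γ :=
        Algebra.subset_adjoin (Or.inr ⟨p, hp, rfl⟩)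
      simp only [Derivation.leibniz_inv, hD j p, smul_eq_mul]
      exact mul_mem (neg_mem (pow_mem hinv 2)) (mem_Agam s t γ _)
  | algebraMap c => simp
  | add x y _ _ hx hy => rw [map_add]; exact add_mem hx hy
  | mul x y hx' hy' hx hy =>
    rw [Derivation.leibniz]
    exact add_mem (mul_mem hx' hy) (mul_mem hy' hx)

theorem Agam_finiteType (s t : Fin m → PA m) (γ : Fin m → Bool × Bool) :
    Algebra.FiniteType ℂ (Agam s t γ) := by
  rw [← Subalgebra.fg_iff_finiteType]
  have hfin : (Set.range (fun j : Fin (m + 2) => algebraMap (PA m) (FB m) (X j)) ∪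
      ((fun x => (algebraMap (PA m) (FB m) x)⁻¹) '' Sgam s t γ)).Finite := by
    refine (Set.finite_range _).union (Set.Finite.image _ ?_)
    refine ((Set.finite_range s).union (Set.finite_range t)).subset ?_
    rintro x (⟨i, _, rfl⟩ | ⟨i, _, rfl⟩)
    · exact Or.inl ⟨i, rfl⟩
    · exact Or.inr ⟨i, rfl⟩
  refine ⟨hfin.toFinset, ?_⟩
  rw [hfin.coe_toFinset]
  refine le_antisymm (Algebra.adjoin_mono ?_) (Algebra.adjoin_le ?_)
  · refine Set.union_subset_union_left _ ?_
    rintro _ ⟨j, rfl⟩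
    exact ⟨X j, rfl⟩
  · rintro x (⟨p, rfl⟩ | hx)
    · induction p using MvPolynomial.induction_on with
      | C c =>
        have : algebraMap (PA m) (FB m) (C c) = algebraMap ℂ (FB m) c := by
          rw [IsScalarTower.algebraMap_apply ℂ (PA m) (FB m)]; rfl
        rw [this]
        exact Subalgebra.algebraMap_mem _ c
      | add p q hp hq => rw [map_add]; exact add_mem hp hq
      | mul_X p i hp =>
        rw [map_mul]
        exact mul_mem hp (Algebra.subset_adjoin (Or.inl ⟨i, rfl⟩))
    · exact Algebra.subset_adjoin (Or.inr hx)

/-- The matrix with denominators cleared. -/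
def NB (D : Fin (m + 2) → Derivation ℂ (FB m) (FB m)) (s t : Fin m → PA m) (f g : FB m) :
    Matrix (Fin (m + 2)) (Fin (m + 2)) (FB m) :=
  Fin.cons (fun j => D j f) (Fin.cons (fun j => D j g)
    (fun i j => algebraMap (PA m) (FB m) (t i * pderiv j (s i) - s i * pderiv j (t i))))

theorem brB_eq_det (D : Fin (m + 2) → Derivation ℂ (FB m) (FB m)) (hD : IsPartialDerivs D)
    (s t : Fin m → PA m) (ht : ∀ i, t i ≠ 0) (f g : FB m) :
    brB D s t f g = (NB D s t f g).det := by
  let v : Fin (m + 2) → FB m :=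
    Fin.cons 1 (Fin.cons 1 (fun i => algebraMap (PA m) (FB m) (t i) ^ 2))
  have hv : algebraMap (PA m) (FB m) ((∏ i, t i) ^ 2) = ∏ i, v i := by
    simp [v, Fin.prod_univ_succ, Finset.prod_pow]
  unfold brB Jac
  rw [hv, ← Matrix.det_mul_column]
  congr 1
  ext i j
  refine Fin.cases ?_ (fun i => Fin.cases ?_ (fun i => ?_) i) i
  · simp [v, NB]
  · simp [v, NB]
  · have h0 : algebraMap (PA m) (FB m) (t i) ≠ 0 := by
      simpa using ht i
    simp only [v, NB, Matrix.of_apply, Fin.cons_succ, Derivation.leibniz_div, hD j, smul_eq_mul,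
      map_sub, map_mul]
    field_simp

theorem brB_mem (D : Fin (m + 2) → Derivation ℂ (FB m) (FB m)) (hD : IsPartialDerivs D)
    (s t : Fin m → PA m) (ht : ∀ i, t i ≠ 0) (γ : Fin m → Bool × Bool) (f g : FB m)
    (hf : f ∈ Agam s t γ) (hg : g ∈ Agam s t γ) :
    ∃ N : Matrix (Fin (m + 2)) (Fin (m + 2)) (Agam s t γ),
      (∀ i j, (N i j : FB m) = NB D s t f g i j) ∧ ((N.det : Agam s t γ) : FB m) = brB D s t f g := by
  have hmem : ∀ i j, NB D s t f g i j ∈ Agam s t γ := by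
    intro i j
    refine Fin.cases ?_ (fun i => Fin.cases ?_ (fun i => ?_) i) i
    · exact D_mem D hD s t γ j f hf
    · exact D_mem D hD s t γ j g hg
    · exact mem_Agam s t γ _
  refine ⟨fun i j => ⟨_, hmem i j⟩, fun i j => rfl, ?_⟩
  rw [brB_eq_det D hD s t ht]
  exact (Agam s t γ).val.toRingHom.map_det _

/-- Hamiltonian derivation `{·, g}`. -/
theorem exists_dB (D : Fin (m + 2) → Derivation ℂ (FB m) (FB m))
    (s t : Fin m → PA m) (g : FB m) :
    ∃ d : Derivation ℂ (FB m) (FB m), ∀ f, d f = brB D s t f g := by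
  let b : Fin (m + 1) → FB m := Fin.cons g
      (fun i => algebraMap (PA m) (FB m) (s i) / algebraMap (PA m) (FB m) (t i))
  let M : Matrix (Fin (m + 1)) (Fin (m + 2)) (FB m) := Matrix.of fun i j => D j (b i)
  refine ⟨∑ j : Fin (m + 2), (algebraMap (PA m) (FB m) ((∏ i, t i) ^ 2) * ((-1) ^ (j : ℕ) *
    (M.submatrix id j.succAbove).det)) • D j, fun f => ?_⟩
  unfold brB Jac
  rw [Matrix.det_succ_row_zero, Finset.mul_sum]
  rw [der_sum_apply]
  simp only [Derivation.smul_apply, smul_eq_mul]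
  refine Finset.sum_congr rfl fun j _ => ?_
  have : (Matrix.of fun i j => D j ((Fin.cons f b : Fin (m + 2) → FB m) i)).submatrix Fin.succ
      j.succAbove = M.submatrix id j.succAbove := by
    ext i k
    simp [M]
  change _ = _ * ((-1) ^ (j : ℕ) * (Matrix.of fun i j => D j ((Fin.cons f b : Fin (m + 2) → FB m) i)) 0 j *
    ((Matrix.of fun i j => D j ((Fin.cons f b : Fin (m + 2) → FB m) i)).submatrix Fin.succ
      j.succAbove).det)
  rw [this]
  simp only [Matrix.of_apply, Fin.cons_zero]
  ring

theorem brB_self (D : Fin (m + 2) → Derivation ℂ (FB m) (FB m))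
    (s t : Fin m → PA m) (f : FB m) : brB D s t f f = 0 := by
  unfold brB Jac
  rw [Matrix.det_zero_of_row_eq (i := 0) (j := 1) (by simp), mul_zero]
  ext j
  rfl

theorem brB_casimir (D : Fin (m + 2) → Derivation ℂ (FB m) (FB m))
    (s t : Fin m → PA m) (g : FB m) (i : Fin m) :
    brB D s t (algebraMap (PA m) (FB m) (s i) / algebraMap (PA m) (FB m) (t i)) g = 0 := by
  unfold brB Jac
  rw [Matrix.det_zero_of_row_eq (i := 0) (j := i.succ.succ) (Fin.succ_ne_zero _).symm, mul_zero]
  ext j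
  simp

theorem brB_swap (D : Fin (m + 2) → Derivation ℂ (FB m) (FB m))
    (s t : Fin m → PA m) (f g : FB m) : brB D s t f g = - brB D s t g f := by
  unfold brB Jac
  rw [← mul_neg]
  congr 1
  have h := Matrix.det_permute (Equiv.swap (0 : Fin (m + 2)) 1)
    (Matrix.of fun i j => D j ((Fin.cons g (Fin.cons f
      (fun i => algebraMap (PA m) (FB m) (s i) / algebraMap (PA m) (FB m) (t i))) :
        Fin (m + 2) → FB m) i))
  rw [Equiv.Perm.sign_swap (by simp)] at h
  simp only [Units.val_neg, Units.val_one, Int.cast_neg, Int.cast_one, neg_mul, one_mul] at h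
  rw [← h]
  congr 1
  ext i j
  refine Fin.cases ?_ (fun i => Fin.cases ?_ (fun i => ?_) i) i
  · simp only [Matrix.submatrix_apply, Equiv.swap_apply_left]; rfl
  · have : (Fin.succ 0 : Fin (m + 2)) = 1 := rfl
    simp only [this, Matrix.submatrix_apply, Equiv.swap_apply_right]; rfl
  · have h2 : (Equiv.swap (0 : Fin (m + 2)) 1) i.succ.succ = i.succ.succ :=
      Equiv.swap_apply_of_ne_of_ne (Fin.succ_ne_zero _)
        (by rw [← Fin.succ_zero_eq_one]; exact fun h => Fin.succ_ne_zero _ (Fin.succ_injective _ h))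
    simp only [Matrix.submatrix_apply, h2]; rfl

theorem hpd_aux (D : Fin (m + 2) → Derivation ℂ (FB m) (FB m)) (hD : IsPartialDerivs D)
    (s t : Fin m → PA m) (γ : Fin m → Bool × Bool)
    (M : Type) [AddCommGroup M] [Module (Agam s t γ) M] [Module ℂ M]
    [IsScalarTower ℂ (Agam s t γ) M]
    (d : Derivation ℂ (Agam s t γ) M) (r : Agam s t γ) :
    d r = ∑ j, restrDer (D j) (Agam s t γ) (D_mem D hD s t γ j) r •
      d ⟨algebraMap (PA m) (FB m) (X j), mem_Agam s t γ _⟩ := by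
  let x : Fin (m + 2) → Agam s t γ := fun j => ⟨algebraMap (PA m) (FB m) (X j), mem_Agam s t γ _⟩
  let e : Derivation ℂ (Agam s t γ) M := d - ∑ j,
    (LinearMap.toSpanSingleton (Agam s t γ) M (d (x j))).compDer
      (restrDer (D j) (Agam s t γ) (D_mem D hD s t γ j))
  have he : ∀ r, e r = d r - ∑ j, restrDer (D j) (Agam s t γ) (D_mem D hD s t γ j) r • d (x j) := by
    intro r
    simp only [e, Derivation.sub_apply]
    rw [der_sum_apply]
    rfl
  suffices h : e r = 0 by
    rw [he, sub_eq_zero] at h; exact h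
  have hX : ∀ i, e (x i) = 0 := by
    intro i
    rw [he, sub_eq_zero, Finset.sum_eq_single i]
    · have : restrDer (D i) (Agam s t γ) (D_mem D hD s t γ i) (x i) = 1 := by
        apply Subtype.ext
        rw [restrDer_coe, hD]
        simp
      rw [this, one_smul]
    · intro j _ hj
      have : restrDer (D j) (Agam s t γ) (D_mem D hD s t γ j) (x i) = 0 := by
        apply Subtype.ext
        rw [restrDer_coe, hD, pderiv_X_of_ne hj.symm]
        simp
      rw [this, zero_smul]
    · simp
  have hA : ∀ p : PA m, e ⟨algebraMap (PA m) (FB m) p, mem_Agam s t γ p⟩ = 0 := by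
    intro p
    induction p using MvPolynomial.induction_on with
    | C c =>
      have : (⟨algebraMap (PA m) (FB m) (C c), mem_Agam s t γ _⟩ : Agam s t γ) =
          algebraMap ℂ (Agam s t γ) c := by
        apply Subtype.ext
        change _ = algebraMap ℂ (FB m) c
        rw [IsScalarTower.algebraMap_apply ℂ (PA m) (FB m)]; rfl
      rw [this, Derivation.map_algebraMap]
    | add p q hp hq =>
      have : (⟨algebraMap (PA m) (FB m) (p + q), mem_Agam s t γ _⟩ : Agam s t γ) =
          ⟨algebraMap (PA m) (FB m) p, mem_Agam s t γ _⟩ +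
          ⟨algebraMap (PA m) (FB m) q, mem_Agam s t γ _⟩ := Subtype.ext (map_add _ _ _)
      rw [this, map_add, hp, hq, add_zero]
    | mul_X p i hp =>
      have : (⟨algebraMap (PA m) (FB m) (p * X i), mem_Agam s t γ _⟩ : Agam s t γ) =
          ⟨algebraMap (PA m) (FB m) p, mem_Agam s t γ _⟩ * x i := Subtype.ext (map_mul _ _ _)
      rw [this, Derivation.leibniz, hp, hX]
      simp
  obtain ⟨r, hr⟩ := r
  have hr' := hr
  unfold Agam at hr'
  suffices h : ∀ hr : r ∈ Agam s t γ, e ⟨r, hr⟩ = 0 from h hr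
  clear hr
  induction hr' using Algebra.adjoin_induction with
  | mem y hy =>
    rcases hy with ⟨p, rfl⟩ | ⟨p, hp, rfl⟩
    · intro hr; exact hA p
    · intro hr
      by_cases h0 : algebraMap (PA m) (FB m) p = 0
      · have : (⟨(algebraMap (PA m) (FB m) p)⁻¹, hr⟩ : Agam s t γ) = 0 :=
          Subtype.ext (by simp [h0])
        exact (congrArg e this).trans (map_zero e)
      · have h1 : (⟨(algebraMap (PA m) (FB m) p)⁻¹, hr⟩ : Agam s t γ) *
            ⟨algebraMap (PA m) (FB m) p, mem_Agam s t γ p⟩ = 1 :=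
          Subtype.ext (inv_mul_cancel₀ h0)
        have h2 := congrArg e h1
        rw [Derivation.leibniz, hA, smul_zero, zero_add, Derivation.map_one_eq_zero] at h2
        have h3 := congrArg (fun z => (⟨(algebraMap (PA m) (FB m) p)⁻¹, hr⟩ : Agam s t γ) • z) h2
        simp only [smul_smul, h1, one_smul, smul_zero] at h3
        exact h3
  | algebraMap c => intro hr; exact e.map_algebraMap c
  | add y z hy hz ihy ihz =>
    intro hr
    have : (⟨y + z, hr⟩ : Agam s t γ) = ⟨y, hy⟩ + ⟨z, hz⟩ := rfl
    rw [this, map_add, ihy hy, ihz hz, add_zero]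
  | mul y z hy hz ihy ihz =>
    intro hr
    have : (⟨y * z, hr⟩ : Agam s t γ) = ⟨y, hy⟩ * ⟨z, hz⟩ := rfl
    rw [this, Derivation.leibniz, ihy hy, ihz hz]
    simp

theorem kill_C (D : Fin (m + 2) → Derivation ℂ (FB m) (FB m))
    (s t : Fin m → PA m) (γ : Fin m → Bool × Bool) (d : Derivation ℂ (FB m) (FB m)) (g : FB m)
    (hd : ∀ f, d f = brB D s t f g) : ∀ c ∈ Cgam s t γ, d c = 0 := by
  intro c hc
  induction hc using Algebra.adjoin_induction with
  | mem x hx =>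
    obtain ⟨i, rfl⟩ := hx
    have h := brB_casimir D s t g i
    rw [← hd] at h
    unfold vgam
    split_ifs
    · exact h
    · rw [← inv_div, Derivation.leibniz_inv, h, smul_zero]
  | algebraMap c => simp
  | add x y _ _ hx hy => rw [map_add, hx, hy, add_zero]
  | mul x y _ _ hx hy => rw [Derivation.leibniz, hx, hy]; simp

end conc

theorem statement_10 {m : ℕ} (hm : 1 ≤ m)
    (D : Fin (m + 2) → Derivation ℂ (FB m) (FB m)) (hD : IsPartialDerivs D)
    (s t : Fin m → PA m)
    (ht : ∀ i, t i ≠ 0)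
    (hcop : ∀ i, ∀ d : PA m, d ∣ s i → d ∣ t i → IsUnit d)
    (hind : AlgebraicIndependent ℂ
      (fun i => algebraMap (PA m) (FB m) (s i) / algebraMap (PA m) (FB m) (t i)))
    (γ : Fin m → Bool × Bool) (hdense : ∀ i, γ i ≠ (false, false))
    (hsub : Cgam s t γ ≤ Agam s t γ)
    (Q : Ideal (Agam s t γ))
    (hQprime : Q.IsPrime) (hQne : Q ≠ ⊥)
    (hQpoisson : ∀ q ∈ Q, ∀ r : Agam s t γ,
      ∃ w ∈ Q, brB D s t (q : FB m) (r : FB m) = (w : FB m))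
    (hQproper : ¬ ∀ f g : Agam s t γ,
      ∃ w ∈ Q, brB D s t (f : FB m) (g : FB m) = (w : FB m)) :
    Q ∈ (Ideal.map (Subalgebra.inclusion hsub)
      (Ideal.comap (Subalgebra.inclusion hsub) Q)).minimalPrimes := by
  have hs : ∀ i, s i ≠ 0 := by
    intro i h
    have := hind.ne_zero i
    simp [h] at this
  let _ : Algebra (Cgam s t γ) (Agam s t γ) := (Subalgebra.inclusion hsub).toRingHom.toAlgebra
  have : IsScalarTower ℂ (Cgam s t γ) (Agam s t γ) := IsScalarTower.of_algebraMap_eq fun x => rfl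
  have := Agam_finiteType s t γ
  push Not at hQproper
  obtain ⟨f, g, hfg⟩ := hQproper
  obtain ⟨N, hN, hdet⟩ := brB_mem D hD s t ht γ f g f.2 g.2
  have hbr : ∀ a ∈ Agam s t γ, ∀ b ∈ Agam s t γ, brB D s t a b ∈ Agam s t γ := by
    intro a ha b hb
    obtain ⟨N', _, h⟩ := brB_mem D hD s t ht γ a b ha hb
    rw [← h]; exact Subtype.property _
  obtain ⟨d₁, hd₁⟩ := exists_dB D s t (g : FB m)
  obtain ⟨d₂, hd₂⟩ := exists_dB D s t (f : FB m)
  let δ₁ := restrDer d₁ (Agam s t γ) (fun r hr => by rw [hd₁]; exact hbr r hr g g.2)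
  let δ₂ := -restrDer d₂ (Agam s t γ) (fun r hr => by rw [hd₂]; exact hbr r hr f f.2)
  have e₁ : ∀ r, ((δ₁ r : Agam s t γ) : FB m) = brB D s t r g := fun r => hd₁ r
  have e₂ : ∀ r, ((δ₂ r : Agam s t γ) : FB m) = - brB D s t r f := fun r =>
    congrArg Neg.neg (hd₂ r)
  refine ⟨⟨hQprime, Ideal.map_comap_le⟩, ?_⟩
  rintro P ⟨hP, hle⟩ hPQ
  refine aux_main (C := Cgam s t γ) (R := Agam s t γ)
    (fun j => ⟨algebraMap (PA m) (FB m) (X j), mem_Agam s t γ _⟩)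
    (fun j r => restrDer (D j) (Agam s t γ) (D_mem D hD s t γ j) r)
    (fun M _ _ _ _ d r => hpd_aux D hD s t γ M d r)
    Q hQprime f g N.det (fun h => hfg _ h hdet.symm) δ₁ δ₂ ?_ ?_ ?_ ?_ ?_ ?_ ?_ ?_ N rfl ?_ P hP hPQ ?_
  · intro c
    apply Subtype.ext
    exact kill_C D s t γ d₁ g hd₁ c c.2
  · intro c
    apply Subtype.ext
    rw [e₂, ← hd₂]
    exact neg_eq_zero.mpr (kill_C D s t γ d₂ f hd₂ c c.2)
  · intro q hq
    obtain ⟨w, hw, h⟩ := hQpoisson q hq g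
    have : δ₁ q = w := Subtype.ext ((e₁ q).trans h)
    rw [this]; exact hw
  · intro q hq
    obtain ⟨w, hw, h⟩ := hQpoisson q hq f
    have : δ₂ q = -w := Subtype.ext ((e₂ q).trans (congrArg Neg.neg h))
    rw [this]; exact neg_mem hw
  · exact Subtype.ext ((e₁ f).trans hdet.symm)
  · exact Subtype.ext ((e₁ g).trans (brB_self D s t g))
  · exact Subtype.ext ((e₂ f).trans (neg_eq_zero.mpr (brB_self D s t f)))
  · exact Subtype.ext ((e₂ g).trans ((brB_swap D s t f g).symm.trans hdet.symm))
  · intro i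
    refine Fin.cases ?_ (fun i => Fin.cases ?_ (fun i => ?_) i) i
    · refine ⟨1, f, Or.inl rfl, fun j => ?_⟩
      rw [one_mul]; exact Subtype.ext (hN _ _)
    · refine ⟨1, g, Or.inr (Or.inl rfl), fun j => ?_⟩
      rw [one_mul]; exact Subtype.ext (hN _ _)
    · have hv : vgam s t γ i ∈ Cgam s t γ := Algebra.subset_adjoin ⟨i, rfl⟩
      have hs0 : algebraMap (PA m) (FB m) (s i) ≠ 0 := by simpa using hs i
      have ht0 : algebraMap (PA m) (FB m) (t i) ≠ 0 := by simpa using ht i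
      refine ⟨⟨algebraMap (PA m) (FB m) (if (γ i).2 then t i ^ 2 else - s i ^ 2), mem_Agam s t γ _⟩,
        _, Or.inr (Or.inr ⟨⟨_, hv⟩, rfl⟩), fun j => Subtype.ext ?_⟩
      rw [hN]
      change algebraMap (PA m) (FB m) (t i * pderiv j (s i) - s i * pderiv j (t i)) =
        algebraMap (PA m) (FB m) (if (γ i).2 then t i ^ 2 else - s i ^ 2) * D j (vgam s t γ i)
      unfold vgam
      split_ifs
      · simp only [Derivation.leibniz_div, hD j, smul_eq_mul, map_sub, map_mul, map_pow]
        field_simp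
      · simp only [Derivation.leibniz_div, hD j, smul_eq_mul, map_sub, map_mul, map_pow, map_neg]
        field_simp
        ring
  · intro c hc
    exact hle (Ideal.mem_map_of_mem _ (Ideal.mem_comap.mpr hc))

end
end

section
/- A Poisson prime ideal P of A is Poisson primitive if and only if either (i) P is a maximal ideal of A that is a Poisson ideal, or (ii) P is a proper Poisson prime ideal (not residually null) and there exist (λ_1,μ_1),…,(λ_{n−2},μ_{n−2}) ∈ ℂ²∖{(0,0)} such that the ideal (λ_1 s_1 − μ_1 t_1)A + ⋯ + (λ_{n−2} s_{n−2} − μ_{n−2} t_{n−2})A is a proper ideal of A and P is a minimal prime ideal over it. -/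
/- STATEMENT 17: A Poisson prime ideal P of A is Poisson primitive iff either
(i) P is a Poisson maximal ideal, or (ii) P is proper (not residually null) and is a
minimal prime over a proper ideal (λ_1s_1−μ_1t_1)A + ⋯ + (λ_{n−2}s_{n−2}−μ_{n−2}t_{n−2})A
with each (λ_i,μ_i) ≠ (0,0). -/

noncomputable section
open MvPolynomial

/-- Minimal primes over an ideal stable under a derivation are stable. -/
lemma min_aux {R : Type*} [CommRing R] [Algebra ℂ R] (D : Derivation ℂ R R)
    (J Q : Ideal R) [hQ : Q.IsPrime] (hJQ : J ≤ Q) (hJ : ∀ u ∈ J, D u ∈ J)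
    (x : R) (hx : x ∈ Q) (hDx : D x ∉ Q) (k : ℕ) :
    ∀ y w : R, y * x ^ k + w * x ^ (k + 1) ∈ J → y ∈ Q := by
  induction k with
  | zero =>
    intro y w h
    have h1 := hJQ h
    have h2 : y = (y * x ^ 0 + w * x ^ (0 + 1)) - w * x := by ring
    rw [h2]
    exact Q.sub_mem h1 (Q.mul_mem_left _ hx)
  | succ k ih =>
    intro y w h
    have h1 := hJ _ h
    have h2 : D (y * x ^ (k + 1) + w * x ^ (k + 1 + 1)) =
        (((k : R) + 1) * y * D x) * x ^ k +
          (D y + D w * x + ((k : R) + 2) * w * D x) * x ^ (k + 1) := by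
      simp only [map_add, Derivation.leibniz, Derivation.leibniz_pow, smul_eq_mul, nsmul_eq_mul,
        Nat.add_sub_cancel]
      push_cast
      ring
    rw [h2] at h1
    have h3 := ih _ _ h1
    have h4 := (hQ.mem_or_mem h3).resolve_right hDx
    refine (hQ.mem_or_mem h4).resolve_left ?_
    intro h5
    apply hQ.ne_top
    rw [Ideal.eq_top_iff_one]
    have h6 : (1 : R) = algebraMap ℂ R ((k : ℂ) + 1)⁻¹ * ((k : R) + 1) := by
      have : ((k : R) + 1) = algebraMap ℂ R ((k : ℂ) + 1) := by simp
      rw [this, ← map_mul, inv_mul_cancel₀ (Nat.cast_add_one_ne_zero k), map_one]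
    rw [h6]
    exact Q.mul_mem_left _ h5

lemma min_stable {R : Type*} [CommRing R] [Algebra ℂ R] (D : Derivation ℂ R R)
    (J Q : Ideal R) (hQ : Q ∈ J.minimalPrimes) (hJ : ∀ u ∈ J, D u ∈ J) :
    ∀ u ∈ Q, D u ∈ Q := by
  intro x hx
  by_contra hDx
  have hQp : Q.IsPrime := hQ.1.1
  have hJQ : J ≤ Q := hQ.1.2
  let S : Submonoid R := Q.primeCompl ⊔ Submonoid.powers x
  have hdis : ¬ Disjoint (J : Set R) S := by
    intro hd
    obtain ⟨p, hp, hJp, hpd⟩ := Ideal.exists_le_prime_disjoint J S hd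
    have hpQ : p ≤ Q := by
      intro z hz
      by_contra hzQ
      exact Set.disjoint_left.1 hpd hz ((le_sup_left : Q.primeCompl ≤ S) hzQ)
    have := hQ.2 ⟨hp, hJp⟩ hpQ hx
    exact Set.disjoint_left.1 hpd this
      ((le_sup_right : Submonoid.powers x ≤ S) (Submonoid.mem_powers x))
  rw [Set.not_disjoint_iff] at hdis
  obtain ⟨z, hzJ, hzS⟩ := hdis
  obtain ⟨y, hy, w, ⟨k, rfl⟩, rfl⟩ := Submonoid.mem_sup.1 hzS
  exact hy (min_aux D J Q hJQ hJ x hx hDx k y 0 (by simpa using hzJ))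

lemma chain_rule {R M : Type*} [CommRing R] [Algebra ℂ R] [AddCommGroup M] [Module R M]
    [Module ℂ M] [IsScalarTower ℂ R M] {σ : Type*} [Fintype σ]
    (D : Derivation ℂ R M) (v : σ → R) (F : MvPolynomial σ ℂ) :
    D (aeval v F) = ∑ i, aeval v (pderiv i F) • D (v i) := by
  classical
  induction F using MvPolynomial.induction_on with
  | C a => simp
  | add p q hp hq => simp [hp, hq, add_smul, Finset.sum_add_distrib]
  | mul_X p j hp =>
    simp only [map_mul, aeval_X, Derivation.leibniz, hp, pderiv_X, smul_eq_mul, map_add, add_smul,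
      Finset.sum_add_distrib, Finset.smul_sum, mul_smul]
    congr 1
    simp [Pi.single_apply]

lemma alg_indep_aux {R : Type*} [CommRing R] [Algebra ℂ R] (P : Ideal R) [hP : P.IsPrime]
    (v : Fin 2 → R) (D : Fin 2 → Derivation ℂ R R) (hD : ∀ i, ∀ u ∈ P, D i u ∈ P)
    (hne : ∀ i, D i (v i) ∉ P) (hz : ∀ i j, i ≠ j → D i (v j) = 0) (d : ℕ) :
    ∀ F : MvPolynomial (Fin 2) ℂ, F.totalDegree ≤ d → aeval v F ∈ P → F = 0 := by
  have key : ∀ F : MvPolynomial (Fin 2) ℂ, aeval v F ∈ P → (∀ i, pderiv i F = 0) → F = 0 := by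
    intro F hF h
    have h1 : F = C (coeff 0 F) := by
      ext m
      by_cases hm : m = 0
      · simp [hm]
      · rw [coeff_C, if_neg (Ne.symm hm)]
        obtain ⟨i, hi⟩ := Finsupp.ne_iff.1 hm
        have h2 := coeff_pderiv (i := i) F (m - Finsupp.single i 1)
        rw [h i, coeff_zero] at h2
        have h3 : m - Finsupp.single i 1 + Finsupp.single i 1 = m := by
          apply tsub_add_cancel_of_le
          rw [Finsupp.single_le_iff]
          exact Nat.one_le_iff_ne_zero.2 hi
        rw [h3] at h2
        rcases mul_eq_zero.1 h2.symm with h4 | h4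
        · exact h4
        · exact absurd h4 (Nat.cast_add_one_ne_zero _)
    by_contra hF0
    have hc : coeff 0 F ≠ 0 := by
      intro hc
      rw [hc, C_0] at h1
      exact hF0 h1
    rw [h1, algHom_C] at hF
    apply hP.ne_top
    exact Ideal.eq_top_of_isUnit_mem _ hF ((IsUnit.mk0 _ hc).map (algebraMap ℂ R))
  have step : ∀ F : MvPolynomial (Fin 2) ℂ, aeval v F ∈ P → ∀ i, aeval v (pderiv i F) ∈ P := by
    intro F hF i
    have h1 := hD i _ hF
    rw [chain_rule, Finset.sum_eq_single i] at h1
    · exact (hP.mem_or_mem h1).resolve_right (hne i)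
    · intro j _ hj
      rw [hz i j hj.symm, smul_zero]
    · simp
  have deg : ∀ (F : MvPolynomial (Fin 2) ℂ) i (m : Fin 2 →₀ ℕ), m ∈ (pderiv i F).support →
      (m.sum fun _ e => e) + 1 ≤ F.totalDegree := by
    intro F i m hm
    rw [mem_support_iff, coeff_pderiv] at hm
    have := le_totalDegree (mem_support_iff.2 (left_ne_zero_of_mul hm))
    rw [Finsupp.sum_add_index' (by simp) (by simp)] at this
    simpa using this
  induction d with
  | zero =>
    intro F hF hFP
    refine key F hFP fun i => ?_
    by_contra hne
    obtain ⟨m, hm⟩ := Finset.nonempty_iff_ne_empty.2 (fun h => hne (support_eq_empty.1 h))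
    have := deg F i m hm
    omega
  | succ d ih =>
    intro F hF hFP
    refine key F hFP fun i => ih _ ?_ (step F hFP i)
    refine Finset.sup_le fun m hm => ?_
    have := deg F i m hm
    omega

lemma alg_of_der {R B L K : Type} [CommRing R] [CommRing B] [Field L] [Field K] [IsDomain R]
    [IsDomain B] [Algebra ℂ R] [Algebra ℂ B] [Algebra ℂ L] [Algebra ℂ K]
    [Algebra R B] [Algebra R L] [Algebra R K] [Algebra B K] [Algebra L K]
    [IsScalarTower ℂ R B] [IsScalarTower ℂ B K] [IsScalarTower ℂ L K]
    [IsScalarTower R B K] [IsScalarTower R L K]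
    [IsFractionRing R L] [IsFractionRing B K] [Algebra.FiniteType ℂ B]
    (h : ∀ (V : Type) [AddCommGroup V] [Module K V] [Module B V] [Module ℂ V]
      [IsScalarTower B K V] [IsScalarTower ℂ B V] (D : Derivation ℂ B V),
      (∀ r : R, D (algebraMap R B r) = 0) → ∀ b, D b = 0) :
    Algebra.IsAlgebraic R B := by
  have : Algebra.EssFiniteType B K :=
    Algebra.EssFiniteType.of_isLocalization K (nonZeroDivisors B)
  have : CharZero L := charZero_of_injective_algebraMap (algebraMap ℂ L).injective
  have : Algebra.EssFiniteType ℂ K := Algebra.EssFiniteType.comp ℂ B K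
  have : Algebra.EssFiniteType L K := Algebra.EssFiniteType.of_comp ℂ L K
  have hΩ : Subsingleton (Ω[K⁄L]) := by
    have hR2 : IsScalarTower ℂ B (Ω[K⁄L]) := IsScalarTower.to₁₂₄ ℂ B K _
    let D : Derivation ℂ B (Ω[K⁄L]) := ((KaehlerDifferential.D L K).restrictScalars ℂ).compAlgebraMap B
    have hD : ∀ b : B, KaehlerDifferential.D L K (algebraMap B K b) = 0 := fun b =>
      h (Ω[K⁄L]) D (fun r => by
        change KaehlerDifferential.D L K (algebraMap B K (algebraMap R B r)) = 0
        rw [← IsScalarTower.algebraMap_apply R B K, IsScalarTower.algebraMap_apply R L K,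
          Derivation.map_algebraMap]) b
    rw [← Submodule.subsingleton_iff K, ← subsingleton_iff_bot_eq_top,
      ← KaehlerDifferential.span_range_derivation, eq_comm, Submodule.span_eq_bot]
    rintro _ ⟨x, rfl⟩
    obtain ⟨a, b, hb, rfl⟩ := IsFractionRing.div_surjective (A := B) x
    rw [Derivation.leibniz_div, hD, hD]
    simp
  have : Algebra.FormallyUnramified L K := ⟨hΩ⟩
  have : Algebra.IsSeparable L K := Algebra.FormallyUnramified.isSeparable L K
  have : Algebra.IsAlgebraic L K := inferInstance
  have : Algebra.IsAlgebraic R K :=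
    (IsFractionRing.comap_isAlgebraic_iff (A := R) (K := L)).2 inferInstance
  exact ⟨fun b => (isAlgebraic_algebraMap_iff (IsFractionRing.injective B K)).1
    (this.isAlgebraic (algebraMap B K b))⟩

lemma alg_of_der' {B : Type} [CommRing B] [IsDomain B] [Algebra ℂ B] [Algebra.FiniteType ℂ B]
    (R : Subalgebra ℂ B)
    (h : ∀ (V : Type) [AddCommGroup V] [Module (FractionRing B) V] [Module B V] [Module ℂ V]
      [IsScalarTower B (FractionRing B) V] [IsScalarTower ℂ B V] (D : Derivation ℂ B V),
      (∀ r ∈ R, D r = 0) → ∀ b, D b = 0) :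
    Algebra.IsAlgebraic R B := by
  have hinj : Function.Injective (algebraMap R (FractionRing B)) := by
    rw [IsScalarTower.algebraMap_eq R B (FractionRing B)]
    exact (IsFractionRing.injective B (FractionRing B)).comp Subtype.val_injective
  have : FaithfulSMul R (FractionRing B) :=
    (faithfulSMul_iff_algebraMap_injective R (FractionRing B)).2 hinj
  let _ : Algebra (FractionRing R) (FractionRing B) := FractionRing.liftAlgebra R (FractionRing B)
  have : IsScalarTower R (FractionRing R) (FractionRing B) :=
    FractionRing.isScalarTower_liftAlgebra R (FractionRing B)
  have : IsScalarTower ℂ (FractionRing R) (FractionRing B) := inferInstance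
  exact alg_of_der (L := FractionRing R) (K := FractionRing B)
    (fun V _ _ _ _ _ _ D hD => h V D (fun r hr => hD ⟨r, hr⟩))

/-- Jacobian criterion: if the total Jacobian is nonzero in `B = A/Q`, then `B` is algebraic over
the subalgebra generated by `f, g`. -/
lemma jac_alg {N : ℕ} {B : Type} [CommRing B] [IsDomain B] [Algebra ℂ B]
    (φ : MvPolynomial (Fin N) ℂ →ₐ[ℂ] B) (hφ : Function.Surjective φ) (f g : B)
    (Mx : Matrix (Fin N) (Fin N) B) (hdet : Mx.det ≠ 0)
    (hrow : ∀ (V : Type) [AddCommGroup V] [Module B V] [Module ℂ V]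
      [IsScalarTower ℂ B V] (D : Derivation ℂ B V),
      D f = 0 → D g = 0 → ∀ i, ∑ j, Mx i j • D (φ (X j)) = 0) :
    Algebra.IsAlgebraic (Algebra.adjoin ℂ ({f, g} : Set B)) B := by
  have : Algebra.FiniteType ℂ B := Algebra.FiniteType.of_surjective φ hφ
  refine alg_of_der' _ ?_
  intro V _ _ _ _ _ _ D hD
  have h0 := hrow V D (hD _ (Algebra.subset_adjoin (by simp)))
    (hD _ (Algebra.subset_adjoin (by simp)))
  have hX : ∀ k, D (φ (X k)) = 0 := by
    intro k
    have h1 : Mx.det • D (φ (X k)) = 0 := by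
      calc Mx.det • D (φ (X k)) = ∑ j, (Mx.adjugate * Mx) k j • D (φ (X j)) := by
            simp [Matrix.adjugate_mul, Matrix.smul_apply, Matrix.one_apply]
        _ = ∑ i, Mx.adjugate k i • ∑ j, Mx i j • D (φ (X j)) := by
            simp only [Matrix.mul_apply, Finset.sum_smul, Finset.smul_sum, mul_smul]
            rw [Finset.sum_comm]
        _ = 0 := by simp [h0]
    rw [← IsScalarTower.algebraMap_smul (FractionRing B)] at h1
    refine (smul_eq_zero.1 h1).resolve_left ?_
    rw [IsFractionRing.to_map_eq_zero_iff]
    exact hdet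
  intro b
  obtain ⟨a, rfl⟩ := hφ b
  have : φ = aeval (fun i => φ (X i)) := by ext; simp
  rw [this, chain_rule]
  exact Finset.sum_eq_zero fun i _ => by rw [hX, smul_zero]

/-- The bracket as a derivation in the first argument. -/
def pD {m : ℕ} (s t : Fin m → PA m) (g : PA m) : Derivation ℂ (PA m) (PA m) :=
  Derivation.mk'
    { toFun := fun f => pbr s t f g
      map_add' := by
        intro f f'
        have h : (fun j => pderiv j (f + f')) = (fun j => pderiv j f) + fun j => pderiv j f' := by
          ext1 j; simp
        exact (congrArg (fun r => Matrix.detRowAlternating.toMultilinearMap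
          (Fin.cons (α := fun _ => Fin (m+2) → PA m) r _)) h).trans (MultilinearMap.cons_add _ _ _ _)
      map_smul' := by
        intro c f
        have h : (fun j => pderiv j (c • f)) = (C c : PA m) • (fun j => pderiv j f) := by
          ext1 j; simp [smul_eq_C_mul]
        rw [RingHom.id_apply, smul_eq_C_mul (pbr s t f g)]
        exact (congrArg (fun r => Matrix.detRowAlternating.toMultilinearMap
          (Fin.cons (α := fun _ => Fin (m+2) → PA m) r _)) h).trans
            (MultilinearMap.cons_smul _ _ _ _) }
    (by
      intro f f'
      have h : (fun j => pderiv j (f * f')) =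
          f • (fun j => pderiv j f') + f' • fun j => pderiv j f := by
        ext1 j; simp
      refine (congrArg (fun r => Matrix.detRowAlternating.toMultilinearMap
          (Fin.cons (α := fun _ => Fin (m+2) → PA m) r _)) h).trans ?_
      rw [MultilinearMap.cons_add, MultilinearMap.cons_smul, MultilinearMap.cons_smul]
      rfl)

lemma pD_apply {m : ℕ} (s t : Fin m → PA m) (f g : PA m) : pD s t g f = pbr s t f g := rfl

lemma pbr_self {m : ℕ} (s t : Fin m → PA m) (f : PA m) : pbr s t f f = 0 :=
  Matrix.det_zero_of_row_eq (i := 0) (j := 1) (by simp) (by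
    ext j; rfl)

lemma pbr_swap {m : ℕ} (s t : Fin m → PA m) (f g : PA m) : pbr s t f g = - pbr s t g f := by
  have h : Matrix.of (pbrRows s t f g) =
      (Matrix.of (pbrRows s t g f)).submatrix (Equiv.swap 0 1) id := by
    funext i
    rw [show (Matrix.of (pbrRows s t g f)).submatrix (Equiv.swap 0 1) id i =
      pbrRows s t g f (Equiv.swap 0 1 i) from rfl]
    induction i using Fin.cases with
    | zero => rw [Equiv.swap_apply_left]; rfl
    | succ i =>
      induction i using Fin.cases with
      | zero =>
        rw [show (Fin.succ 0 : Fin (m + 2)) = 1 from rfl, Equiv.swap_apply_right]; rfl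
      | succ i =>
        have h1 : (i.succ.succ : Fin (m + 2)) ≠ 1 :=
          fun h => Fin.succ_ne_zero i (Fin.succ_injective _ h)
        rw [Equiv.swap_apply_of_ne_of_ne (Fin.succ_ne_zero _) h1]
        rfl
  rw [pbr, h, Matrix.det_permute, pbr, Equiv.Perm.sign_swap (by simp)]
  simp

/-- Writing the `i`-th row in terms of `h = λ s - μ t`. -/
lemma row_eq {R M : Type*} [CommRing R] [Algebra ℂ R] [AddCommGroup M] [Module R M]
    [Module ℂ M] [IsScalarTower ℂ R M] (s t : R) (l u : ℂ) (h : (l, u) ≠ (0, 0)) :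
    ∃ c : ℂ, c ≠ 0 ∧ ∃ q : R, ∀ D : Derivation ℂ R M,
      c • (t • D s - s • D t) = q • D (l • s - u • t) - (l • s - u • t) • D q := by
  by_cases hl : l = 0
  · refine ⟨u, fun hu => h (by rw [hl, hu]), s, fun D => ?_⟩
    subst hl
    simp only [map_neg, Derivation.map_smul, zero_smul, zero_sub, smul_sub, smul_neg,
      neg_smul, smul_assoc, smul_comm s u]
    abel
  · refine ⟨l, hl, t, fun D => ?_⟩
    simp only [map_sub, Derivation.map_smul, smul_sub, sub_smul, smul_assoc, smul_comm t u,
      smul_comm t l]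
    abel

/-- Principal ideals generated by `λ s - μ t` are Poisson. -/
lemma h_poisson {m : ℕ} (s t : Fin m → PA m) (i : Fin m) (l u : ℂ) (h : (l, u) ≠ (0, 0))
    (r : PA m) : l • s i - u • t i ∣ pbr s t (l • s i - u • t i) r := by
  set x := l • s i - u • t i with hx
  obtain ⟨c, hc, q, hq⟩ := row_eq (M := PA m) (s i) (t i) l u h
  have hdvd : x ∣ c • pbr s t x r := by
    let W := Matrix.of (pbrRows s t x r)
    have hrow : (C c : PA m) • W i.succ.succ = q • W 0 + x • (fun j => - pderiv j q) := by
      ext1 j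
      have := hq (pderiv j)
      simp only [smul_eq_mul, smul_eq_C_mul] at this
      simp only [Pi.smul_apply, Pi.add_apply, smul_eq_mul]
      change C c * (t i * pderiv j (s i) - s i * pderiv j (t i)) =
        q * pderiv j x + x * (- pderiv j q)
      rw [this, hx]
      simp only [smul_eq_C_mul]
      ring
    have h1 : (C c : PA m) * W.det = x * (W.updateRow i.succ.succ (fun j => - pderiv j q)).det := by
      conv_lhs => rw [← Matrix.updateRow_eq_self W i.succ.succ]
      rw [← Matrix.det_updateRow_smul, hrow, Matrix.det_updateRow_add, Matrix.det_updateRow_smul,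
        Matrix.det_updateRow_smul, Matrix.det_updateRow_eq_zero, mul_zero, zero_add]
      exact (Fin.succ_ne_zero _).symm
    rw [smul_eq_C_mul]
    exact ⟨_, h1⟩
  have : pbr s t x r = C c⁻¹ * c • pbr s t x r := by
    rw [smul_eq_C_mul, ← mul_assoc, ← C_mul, inv_mul_cancel₀ hc, C_1, one_mul]
  rw [this]
  exact hdvd.mul_left _

lemma main_eq_aux {m : ℕ} (s t : Fin m → PA m) {B : Type} [CommRing B] [IsDomain B] [Algebra ℂ B]
    (φ : PA m →ₐ[ℂ] B) (hφs : Function.Surjective φ) (P Q : Ideal (PA m)) (hP : P.IsPrime)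
    (hPp : ∀ u ∈ P, ∀ r : PA m, pbr s t u r ∈ P) (f g : PA m) (hfg : pbr s t f g ∉ P)
    (hQP : Q ≤ P) (lam mu : Fin m → ℂ) (hne : ∀ i, (lam i, mu i) ≠ (0, 0))
    (hmem : ∀ i, lam i • s i - mu i • t i ∈ Q)
    (hφ0 : ∀ x, φ x = 0 ↔ x ∈ Q) : P ≤ Q := by
  intro u hu
  by_contra huQ
  have halg : Algebra.IsAlgebraic (Algebra.adjoin ℂ ({φ f, φ g} : Set B)) B := by
    refine jac_alg φ hφs (φ f) (φ g) ((Matrix.of (pbrRows s t f g)).map φ) ?_ ?_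
    · have h1 := AlgHom.map_det φ (Matrix.of (pbrRows s t f g))
      rw [AlgHom.mapMatrix_apply] at h1
      rw [← h1, Ne.eq_def, hφ0]
      exact fun h => hfg (hQP h)
    · intro V _ _ _ _ D hf hg i
      have hch : ∀ F : PA m, ∑ j, φ (pderiv j F) • D (φ (X j)) = D (φ F) := by
        intro F
        have : φ = aeval (fun i => φ (X i)) := by ext; simp
        conv_rhs => rw [this]
        rw [chain_rule]
        simp only [← this]
      simp only [Matrix.map_apply, Matrix.of_apply]
      induction i using Fin.cases with
      | zero => exact (hch f).trans hf
      | succ i =>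
        induction i using Fin.cases with
        | zero => exact (hch g).trans hg
        | succ i =>
          change ∑ j, φ (t i * pderiv j (s i) - s i * pderiv j (t i)) • D (φ (X j)) = 0
          simp only [map_sub, map_mul, sub_smul, mul_smul, Finset.sum_sub_distrib,
            ← Finset.smul_sum, hch]
          obtain ⟨c, hc, q, hq⟩ := row_eq (M := V) (φ (s i)) (φ (t i)) (lam i) (mu i) (hne i)
          have hz : lam i • φ (s i) - mu i • φ (t i) = 0 := by
            rw [← map_smul, ← map_smul, ← map_sub, hφ0]
            exact hmem i
          have h2 := hq D
          rw [hz, map_zero, smul_zero, zero_smul, sub_zero] at h2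
          exact (smul_eq_zero.1 h2).resolve_left hc
  obtain ⟨⟨r, hr⟩, hr0, b, hb⟩ := (halg.isAlgebraic (φ u)).exists_nonzero_dvd
    (mem_nonZeroDivisors_of_ne_zero (by rwa [Ne.eq_def, hφ0]))
  obtain ⟨b, rfl⟩ := hφs b
  have hrange : ({φ f, φ g} : Set B) = Set.range (fun i => φ (![f, g] i)) := by
    ext x; simp [eq_comm]
  have hr' := hr
  rw [hrange, Algebra.adjoin_range_eq_range_aeval] at hr'
  obtain ⟨F, hF⟩ := hr'
  have hF' : φ (aeval ![f, g] F) = r := by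
    rw [← hF]
    change φ (aeval ![f, g] F) = aeval (fun i => φ (![f, g] i)) F
    rw [← AlgHom.comp_apply, comp_aeval]
  have hFP : aeval ![f, g] F ∈ P := by
    have h1 : aeval ![f, g] F - u * b ∈ Q := by
      rw [← hφ0, map_sub, hF', map_mul, ← hb]
      exact sub_self _
    have h2 := P.add_mem (hQP h1) (P.mul_mem_right b hu)
    rwa [sub_add_cancel] at h2
  have hF0 : F = 0 := by
    refine alg_indep_aux P ![f, g] ![pD s t g, pD s t f] ?_ ?_ ?_ F.totalDegree F le_rfl hFP
    · intro i u hu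
      fin_cases i
      · exact hPp u hu g
      · exact hPp u hu f
    · intro i
      fin_cases i
      · exact hfg
      · change pbr s t g f ∉ P
        rw [pbr_swap, neg_mem_iff]
        exact hfg
    · intro i j hij
      fin_cases i <;> fin_cases j
      · exact absurd rfl hij
      · exact pbr_self s t g
      · exact pbr_self s t f
      · exact absurd rfl hij
  apply hr0
  apply Subtype.ext
  change r = 0
  rw [← hF', hF0, map_zero, map_zero]

lemma main_eq {m : ℕ} (s t : Fin m → PA m) (P Q : Ideal (PA m)) (hP : P.IsPrime) (hQ : Q.IsPrime)
    (hPp : ∀ u ∈ P, ∀ r : PA m, pbr s t u r ∈ P) (f g : PA m) (hfg : pbr s t f g ∉ P)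
    (hQP : Q ≤ P) (lam mu : Fin m → ℂ) (hne : ∀ i, (lam i, mu i) ≠ (0, 0))
    (hmem : ∀ i, lam i • s i - mu i • t i ∈ Q) : P ≤ Q :=
  main_eq_aux s t (Ideal.Quotient.mkₐ ℂ Q) (Ideal.Quotient.mkₐ_surjective ℂ Q) P Q hP hPp f g hfg
    hQP lam mu hne hmem (fun _ => Ideal.Quotient.eq_zero_iff_mem)

theorem statement_17 {m : ℕ} (hm : 1 ≤ m)
    (s t : Fin m → PA m)
    (ht : ∀ i, t i ≠ 0)
    (hcop : ∀ i, ∀ d : PA m, d ∣ s i → d ∣ t i → IsUnit d)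
    (hind : AlgebraicIndependent ℂ
      (fun i => algebraMap (PA m) (FB m) (s i) / algebraMap (PA m) (FB m) (t i)))
    (P : Ideal (PA m)) (hPprime : P.IsPrime)
    (hPpoisson : ∀ u ∈ P, ∀ r : PA m, pbr s t u r ∈ P) :
    -- P is Poisson primitive
    (∃ M : Ideal (PA m), M.IsMaximal ∧ P ≤ M ∧
        ∀ J : Ideal (PA m), (∀ u ∈ J, ∀ r : PA m, pbr s t u r ∈ J) → J ≤ M → J ≤ P) ↔
      -- iff (i) P is a maximal (hence Poisson maximal) ideal, or
      (P.IsMaximal ∨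
      -- (ii) P is proper and is a minimal prime over a proper ideal
      --      (λ_1s_1−μ_1t_1)A + ⋯ + (λ_{n−2}s_{n−2}−μ_{n−2}t_{n−2})A
       ((¬ ∀ f g : PA m, pbr s t f g ∈ P) ∧
        ∃ lam mu : Fin m → ℂ, (∀ i, (lam i, mu i) ≠ (0, 0)) ∧
          Ideal.span (Set.range fun i => C (lam i) * s i - C (mu i) * t i) ≠ ⊤ ∧
          P ∈ (Ideal.span
            (Set.range fun i => C (lam i) * s i - C (mu i) * t i)).minimalPrimes)) := by
  have hh : ∀ (lam mu : Fin m → ℂ) i, C (lam i) * s i - C (mu i) * t i =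
      lam i • s i - mu i • t i := by
    intro lam mu i
    simp only [smul_eq_C_mul]
  simp only [hh]
  constructor
  · rintro ⟨M, hM, hPM, hcore⟩
    by_cases hnull : ∀ f g : PA m, pbr s t f g ∈ P
    · left
      have : M ≤ P := hcore M (fun u _ r => hPM (hnull u r)) le_rfl
      rwa [le_antisymm hPM this]
    · right
      refine ⟨hnull, ?_⟩
      obtain ⟨p, rfl⟩ := isMaximal_iff_eq_vanishingIdeal_singleton.1 hM
      have hex : ∀ i, ∃ lu : ℂ × ℂ, lu ≠ (0, 0) ∧
          aeval p (lu.1 • s i - lu.2 • t i) = 0 := by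
        intro i
        by_cases h0 : (aeval p (t i) : ℂ) = 0 ∧ (aeval p (s i) : ℂ) = 0
        · exact ⟨(1, 0), by simp, by simp [h0.2]⟩
        · refine ⟨(aeval p (t i), aeval p (s i)), ?_, ?_⟩
          · intro h
            rw [Prod.mk.injEq] at h
            exact h0 h
          · rw [map_sub, map_smul, map_smul, smul_eq_mul, smul_eq_mul]
            ring
      choose lu hlu0 hlu using hex
      have hmemP : ∀ i, (lu i).1 • s i - (lu i).2 • t i ∈ P := by
        intro i
        refine hcore (Ideal.span {(lu i).1 • s i - (lu i).2 • t i}) ?_ ?_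
          (Ideal.mem_span_singleton_self _)
        · intro u hu r
          rw [Ideal.mem_span_singleton] at hu ⊢
          obtain ⟨w, rfl⟩ := hu
          rw [← pD_apply, Derivation.leibniz, pD_apply, pD_apply]
          exact dvd_add (Dvd.intro _ rfl) ((h_poisson s t i _ _ (hlu0 i) r).mul_left _)
        · rw [Ideal.span_singleton_le_iff_mem, mem_vanishingIdeal_iff]
          intro x hx
          rw [Set.mem_singleton_iff.1 hx]
          exact hlu i
      have hle : Ideal.span (Set.range fun i => (lu i).1 • s i - (lu i).2 • t i) ≤ P := by
        rw [Ideal.span_le]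
        rintro _ ⟨i, rfl⟩
        exact hmemP i
      refine ⟨fun i => (lu i).1, fun i => (lu i).2, fun i => hlu0 i, ?_, ⟨hPprime, hle⟩, ?_⟩
      · intro h
        rw [h] at hle
        exact hPprime.ne_top (top_le_iff.1 hle)
      · intro Q hQ hQP
        push Not at hnull
        obtain ⟨f, g, hfg⟩ := hnull
        exact main_eq s t P Q hPprime hQ.1 hPpoisson f g hfg hQP _ _ (fun i => hlu0 i)
          (fun i => hQ.2 (Ideal.subset_span ⟨i, rfl⟩))
  · rintro (hmax | ⟨hnull, lam, mu, hne, -, hmin⟩)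
    · exact ⟨P, hmax, le_rfl, fun J _ h => h⟩
    · push Not at hnull
      obtain ⟨f, g, hfg⟩ := hnull
      have hjac : P.jacobson = P := (inferInstance : IsJacobsonRing (PA m)).out hPprime.isRadical
      rw [← hjac, Ideal.jacobson, Ideal.mem_sInf] at hfg
      push Not at hfg
      obtain ⟨M, ⟨hPM, hM⟩, hfgM⟩ := hfg
      refine ⟨M, hM, hPM, fun J hJ hJM => ?_⟩
      have hMp : M.IsPrime := hM.isPrime
      obtain ⟨Q, hQ, hQM⟩ := Ideal.exists_minimalPrimes_le (sup_le hJM hPM)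
      have hQpois : ∀ u ∈ Q, ∀ r : PA m, pbr s t u r ∈ Q := by
        intro u hu r
        refine min_stable (pD s t r) (J ⊔ P) Q hQ ?_ u hu
        intro x hx
        obtain ⟨a, ha, b, hb, rfl⟩ := Submodule.mem_sup.1 hx
        rw [map_add]
        exact Submodule.add_mem_sup (hJ a ha r) (hPpoisson b hb r)
      have hJPQ : J ⊔ P ≤ Q := hQ.1.2
      exact (le_sup_left.trans hJPQ).trans
        (main_eq s t Q P hQ.1.1 hPprime hQpois f g (fun h => hfgM (hQM h))
          (le_sup_right.trans hJPQ) lam mu hne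
          (fun i => hmin.1.2 (Ideal.subset_span ⟨i, rfl⟩)))


end
end

section
/- Suppose t_i = 1 for each i = 1,…,n−2 and that s_1,…,s_{n−2} are algebraically independent over ℂ. Let (μ_1,…,μ_{n−2}) ∈ ℂ^{n−2} be such that P = (s_1 − μ_1)A + ⋯ + (s_{n−2} − μ_{n−2})A is a prime ideal of A. Then P is a Poisson prime ideal. Moreover, the affine variety X = {p ∈ ℂⁿ : s_i(p) = μ_i for i = 1,…,n−2} is nonsingular — i.e., for every p ∈ X the (n−2)×n Jacobian matrix whose (i,j) entry is (∂s_i/∂x_j)(p) has rank n−2 — if and only if the Poisson algebra A/P (with the induced bracket) is Poisson simple, i.e. the only Poisson ideals of A/P are 0 and A/P. -/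
/- STATEMENT 19: Suppose t_i = 1 and s_1,…,s_{n−2} are algebraically independent over ℂ.
If P = (s_1−μ_1, …, s_{n−2}−μ_{n−2}) is prime then P is a Poisson prime ideal, and the
variety X = {p : s_i(p) = μ_i ∀i} is nonsingular iff A/P is Poisson simple.  (Poisson
ideals of A/P correspond to Poisson ideals of A containing P, so Poisson simplicity of
A/P says: the only Poisson ideals of A containing P are P and A.) -/

noncomputable section
open MvPolynomial

/-- The Hamiltonian derivation. -/
def hamD {m : ℕ} (s : Fin m → PA m) (r : PA m) : Derivation ℂ (PA m) (PA m) :=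
  ∑ j : Fin (m + 2), ((-1) ^ (j : ℕ) *
    ((Matrix.of (pbrRows s (fun _ => 1) 0 r)).submatrix Fin.succ j.succAbove).det) • pderiv j

theorem hamD_apply {m : ℕ} (s : Fin m → PA m) (r u : PA m) :
    hamD s r u = pbr s (fun _ => 1) u r := by
  unfold pbr hamD
  rw [Matrix.det_succ_row_zero]
  change Derivation.coeFnAddMonoidHom (∑ j : Fin (m + 2), _) u = _
  rw [map_sum, Finset.sum_apply]
  refine Finset.sum_congr rfl fun j _ => ?_
  have h : (Matrix.of (pbrRows s (fun _ => 1) u r)).submatrix Fin.succ j.succAbove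
      = (Matrix.of (pbrRows s (fun _ => 1) 0 r)).submatrix Fin.succ j.succAbove := by
    ext a b
    simp [pbrRows]
  rw [h]
  change _ * pderiv j u = _ * pderiv j u * _
  ring

theorem hamD_s {m : ℕ} (s : Fin m → PA m) (r : PA m) (i : Fin m) : hamD s r (s i) = 0 := by
  rw [hamD_apply]
  unfold pbr
  refine Matrix.det_zero_of_row_eq (i := 0) (j := i.succ.succ) (by simp [Fin.ext_iff]) ?_
  ext j
  simp [pbrRows]

theorem hamD_self {m : ℕ} (s : Fin m → PA m) (r : PA m) : hamD s r r = 0 := by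
  rw [hamD_apply]
  unfold pbr
  refine Matrix.det_zero_of_row_eq (i := 0) (j := 1) (by simp [Fin.ext_iff]) ?_
  ext j
  simp [pbrRows]

theorem hamD_swap {m : ℕ} (s : Fin m → PA m) (r u : PA m) : hamD s r u = - hamD s u r := by
  rw [hamD_apply, hamD_apply]
  unfold pbr
  have h := (Matrix.detRowAlternating (n := Fin (m+2)) (R := PA m)).map_swap
    (pbrRows s (fun _ => 1) u r) (i := 0) (j := 1) (by simp [Fin.ext_iff])
  have h2 : pbrRows s (fun _ => 1) u r ∘ (Equiv.swap (0 : Fin (m+2)) 1)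
      = pbrRows s (fun _ => 1) r u := by
    funext k
    refine Fin.cases ?_ (fun k => ?_) k
    · simp [pbrRows]
    · refine Fin.cases ?_ (fun k => ?_) k
      · simp [pbrRows]
      · have : Equiv.swap (0 : Fin (m+2)) 1 k.succ.succ = k.succ.succ := by
          apply Equiv.swap_apply_of_ne_of_ne <;> simp [Fin.ext_iff]
        rw [Function.comp_apply, this]
        simp [pbrRows]
  rw [h2] at h
  exact neg_eq_iff_eq_neg.1 h.symm

/-- Evaluated bracket. -/
theorem eval_pbr {m : ℕ} (s : Fin m → PA m) (r u : PA m) (p : Fin (m+2) → ℂ) :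
    eval p (pbr s (fun _ => 1) u r) = Matrix.det (Matrix.of
      (Fin.cons (fun j => eval p (pderiv j u)) (Fin.cons (fun j => eval p (pderiv j r))
        (fun k j => eval p (pderiv j (s k)))) : Fin (m+2) → Fin (m+2) → ℂ)) := by
  unfold pbr
  rw [RingHom.map_det]
  congr 1
  ext a b
  refine Fin.cases ?_ (fun k => ?_) a
  · simp [pbrRows]
  · refine Fin.cases ?_ (fun k => ?_) k
    · simp [pbrRows]
    · simp [pbrRows]

theorem taylor_mem {m : ℕ} (p : Fin (m+2) → ℂ) (f : PA m) :
    f - C (eval p f) - ∑ j, C (eval p (pderiv j f)) * (X j - C (p j))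
      ∈ (RingHom.ker (eval p)) ^ 2 := by
  induction f using MvPolynomial.induction_on with
  | C a => simp
  | add f g hf hg =>
    convert Ideal.add_mem _ hf hg using 1
    simp only [map_add, add_mul, Finset.sum_add_distrib]
    ring
  | mul_X f i hf =>
    have h1 : (f - C (eval p f)) * (X i - C (p i)) ∈ (RingHom.ker (eval p)) ^ 2 := by
      rw [pow_two]
      apply Ideal.mul_mem_mul <;> simp [RingHom.mem_ker]
    convert Ideal.add_mem _ h1 (Ideal.mul_mem_left _ (C (p i)) hf) using 1
    have : ∀ j, C (eval p (pderiv j (f * X i))) * (X j - C (p j) : PA m)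
      = C (p i) * (C (eval p (pderiv j f)) * (X j - C (p j)))
        + (if j = i then C (eval p f) * (X j - C (p j)) else 0) := by
      intro j
      by_cases hj : j = i
      · subst hj
        simp
        ring
      · simp [pderiv_X_of_ne (Ne.symm hj), hj]
        ring
    simp only [this, Finset.sum_add_distrib, ← Finset.mul_sum]
    simp
    ring

theorem sq_mem_of_grad {m : ℕ} (p : Fin (m+2) → ℂ) (f : PA m) (h0 : eval p f = 0)
    (h1 : ∀ j, eval p (pderiv j f) = 0) : f ∈ (RingHom.ker (eval p)) ^ 2 := by
  simpa [h0, h1] using taylor_mem p f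

theorem P_poisson {m : ℕ} (s : Fin m → PA m) (μ : Fin m → ℂ) (r u : PA m)
    (hu : u ∈ Ideal.span (Set.range fun i => s i - C (μ i))) :
    hamD s r u ∈ Ideal.span (Set.range fun i => s i - C (μ i)) := by
  induction hu using Submodule.span_induction with
  | mem x hx =>
    obtain ⟨i, rfl⟩ := hx
    simp [hamD_s, ← algebraMap_eq]
  | zero => simp
  | add x y _ _ hx hy => rw [map_add]; exact Ideal.add_mem _ hx hy
  | smul a x hx h =>
    rw [smul_eq_mul, Derivation.leibniz]
    exact Ideal.add_mem _ (Ideal.mul_mem_left _ _ h) (by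
      rw [smul_eq_mul]; exact Ideal.mul_mem_right _ _ hx)

theorem rows_indep {m n : ℕ} (M : Matrix (Fin m) (Fin n) ℂ) (h : M.rank = m) :
    LinearIndependent ℂ M.row := by
  rw [linearIndependent_iff_card_eq_finrank_span, Fintype.card_fin,
    Set.finrank, ← Matrix.rank_eq_finrank_span_row, h]

/-- Choice of transversal coordinates. -/
theorem exists_coords {m : ℕ} (M : Matrix (Fin m) (Fin (m+2)) ℂ) (h : M.rank = m) :
    ∃ a b : Fin (m+2) → ℂ, (Matrix.of
      (Fin.cons a (Fin.cons b M.row) : Fin (m+2) → Fin (m+2) → ℂ)).det ≠ 0 := by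
  have h1 := rows_indep M h
  obtain ⟨b, hb⟩ := exists_linearIndependent_cons_of_lt_finrank h1 (by simp)
  obtain ⟨a, ha⟩ := exists_linearIndependent_cons_of_lt_finrank hb (by simp)
  refine ⟨a, b, ?_⟩
  have := (Matrix.linearIndependent_rows_iff_isUnit (A := Matrix.of
      (Fin.cons a (Fin.cons b M.row) : Fin (m+2) → Fin (m+2) → ℂ))).1 ha
  exact ((Matrix.isUnit_iff_isUnit_det _).1 this).ne_zero

theorem singular_dir {m : ℕ} (s : Fin m → PA m) (μ : Fin m → ℂ)
    (hs : ∀ J : Ideal (PA m), Ideal.span (Set.range fun i => s i - C (μ i)) ≤ J →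
        (∀ u ∈ J, ∀ r : PA m, pbr s (fun _ => 1) u r ∈ J) →
          J = Ideal.span (Set.range fun i => s i - C (μ i)) ∨ J = ⊤)
    (p : Fin (m+2) → ℂ) (hp : ∀ i, eval p (s i) = μ i) :
    Matrix.rank (Matrix.of fun i j => eval p (pderiv j (s i))) = m := by
  by_contra hr
  have hA : Ideal.span (Set.range fun i => s i - C (μ i)) ≤ RingHom.ker (eval p) := by
    rw [Ideal.span_le]
    rintro _ ⟨i, rfl⟩
    simp [RingHom.mem_ker, hp]
  have hB : ∀ u ∈ RingHom.ker (eval p), ∀ r : PA m,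
      pbr s (fun _ => 1) u r ∈ RingHom.ker (eval p) := by
    intro u _ r
    rw [RingHom.mem_ker, eval_pbr]
    by_contra hd
    apply hr
    have h1 := Matrix.linearIndependent_rows_iff_isUnit.2
      ((Matrix.isUnit_iff_isUnit_det _).2 (isUnit_iff_ne_zero.2 hd))
    have h2 := h1.comp (fun i : Fin m => i.succ.succ) (fun a b hab => by simpa using hab)
    have h3 : LinearIndependent ℂ
        (Matrix.of fun i j => eval p (pderiv j (s i)) : Matrix (Fin m) (Fin (m+2)) ℂ).row := by
      exact h2
    simpa using h3.rank_matrix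
  rcases hs (RingHom.ker (eval p)) hA hB with h | h
  · -- the maximal ideal is not generated by `m` elements
    have key : ∀ u ∈ Ideal.span (Set.range fun i => s i - C (μ i)),
        (fun j => eval p (pderiv j u)) ∈
          Submodule.span ℂ (Set.range fun i => fun j => eval p (pderiv j (s i))) := by
      intro u hu
      have hker : ∀ x ∈ Ideal.span (Set.range fun i => s i - C (μ i)), eval p x = 0 := by
        intro x hx
        rw [← h] at hx
        exact hx
      induction hu using Submodule.span_induction with
      | mem x hx =>
        obtain ⟨i, rfl⟩ := hx
        apply Submodule.subset_span
        exact ⟨i, by simp⟩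
      | zero => simp; exact Submodule.zero_mem _
      | add x y _ _ hx hy =>
        convert Submodule.add_mem _ hx hy using 1
        ext j; simp
      | smul a x hx hh =>
        convert Submodule.smul_mem _ (eval p a) hh using 1
        ext j
        simp [Derivation.leibniz, hker x hx]
    have htop : Submodule.span ℂ (Set.range fun i => fun j => eval p (pderiv j (s i))) = ⊤ := by
      rw [eq_top_iff, ← (Pi.basisFun ℂ (Fin (m+2))).span_eq, Submodule.span_le]
      rintro _ ⟨i, rfl⟩
      have := key (X i - C (p i)) (by rw [← h]; simp [RingHom.mem_ker])
      rw [SetLike.mem_coe]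
      convert this using 1
      ext j
      by_cases hj : j = i
      · subst hj; simp
      · simp [pderiv_X_of_ne (Ne.symm hj), hj]
    have h3 := finrank_range_le_card (R := ℂ) (fun i => fun j => eval p (pderiv j (s i)))
    rw [Set.finrank, htop] at h3
    simp at h3
  · exact (RingHom.ker_ne_top (eval p)) h

theorem nonsing_dir {m : ℕ} (s : Fin m → PA m) (μ : Fin m → ℂ) (P : Ideal (PA m))
    (hP : P = Ideal.span (Set.range fun i => s i - C (μ i))) (hPp : P.IsPrime)
    (hns : ∀ p : Fin (m + 2) → ℂ, (∀ i, eval p (s i) = μ i) →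
        Matrix.rank (Matrix.of fun i j => eval p (pderiv j (s i))) = m)
    (J : Ideal (PA m)) (hPJ : P ≤ J)
    (hJ : ∀ u ∈ J, ∀ r : PA m, pbr s (fun _ => 1) u r ∈ J) (hJt : J ≠ ⊤) : J ≤ P := by
  obtain ⟨I, hI, hJI⟩ := Ideal.exists_le_maximal J hJt
  obtain ⟨p, hp⟩ := MvPolynomial.isMaximal_iff_eq_vanishingIdeal_singleton.1 hI
  have hIM : I = RingHom.ker (eval p) := by
    ext f
    simp [hp, RingHom.mem_ker, mem_vanishingIdeal_singleton_iff, aeval_eq_eval]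
  set M : Ideal (PA m) := RingHom.ker (eval p) with hM
  have hJM : J ≤ M := hIM ▸ hJI
  have hPM : P ≤ M := hPJ.trans hJM
  have hsP : ∀ i, s i - C (μ i) ∈ P := fun i => by
    rw [hP]; exact Ideal.subset_span ⟨i, rfl⟩
  have hX : ∀ i, eval p (s i) = μ i := by
    intro i
    have := hPM (hsP i)
    rw [hM, RingHom.mem_ker] at this
    simpa [sub_eq_zero] using this
  obtain ⟨a, b, hab⟩ := exists_coords _ (hns p hX)
  set N : Matrix (Fin (m+2)) (Fin (m+2)) ℂ := Matrix.of (Fin.cons a (Fin.cons b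
    (Matrix.of fun i j => eval p (pderiv j (s i)) : Matrix (Fin m) (Fin (m+2)) ℂ).row)) with hN
  let lin : (Fin (m+2) → ℂ) → PA m := fun c => ∑ j, C (c j) * (X j - C (p j))
  have lin_eval : ∀ c, eval p (lin c) = 0 := by
    intro c; simp [lin]
  have lin_grad : ∀ c j, pderiv j (lin c) = C (c j) := by
    intro c j
    simp only [lin, map_sum]
    rw [Finset.sum_eq_single j]
    · simp
    · intro i _ hi
      simp [pderiv_X_of_ne hi]
    · simp
  set y := lin a with hy
  set z := lin b with hz
  have hyM : y ∈ M := lin_eval a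
  have hzM : z ∈ M := lin_eval b
  have hd : eval p (hamD s z y) = N.det := by
    rw [hamD_apply, eval_pbr, hN]
    simp only [hy, hz, lin_grad, eval_C]
    rfl
  -- the Euler derivation
  let E : Derivation ℂ (PA m) (PA m) := y • hamD s z - z • hamD s y
  have E_def : ∀ u, E u = y * hamD s z u - z * hamD s y u := fun u => rfl
  have EP : ∀ u ∈ P, E u ∈ P := by
    intro u hu
    rw [E_def]
    rw [hP] at hu ⊢
    exact Ideal.sub_mem _ (Ideal.mul_mem_left _ _ (P_poisson s μ _ _ hu))
      (Ideal.mul_mem_left _ _ (P_poisson s μ _ _ hu))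
  have EM : ∀ u, E u ∈ M := fun u => by
    rw [E_def]
    exact Ideal.sub_mem _ (Ideal.mul_mem_right _ _ hyM) (Ideal.mul_mem_right _ _ hzM)
  have hdM : hamD s z y - C N.det ∈ M := by
    rw [hM, RingHom.mem_ker]; simp [hd]
  have Ey : E y - C N.det * y ∈ P ⊔ M ^ 2 := by
    apply Ideal.mem_sup_right
    rw [E_def, hamD_self, pow_two]
    convert Ideal.mul_mem_mul hdM hyM using 1
    ring
  have Ez : E z - C N.det * z ∈ P ⊔ M ^ 2 := by
    apply Ideal.mem_sup_right
    rw [E_def, hamD_self, hamD_swap, pow_two]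
    convert Ideal.mul_mem_mul hdM hzM using 1
    ring
  have EM2 : ∀ u ∈ M ^ 2, E u ∈ M ^ 2 := by
    intro u hu
    rw [pow_two] at hu ⊢
    refine Submodule.mul_induction_on hu ?_ ?_
    · intro v hv w hw
      rw [Derivation.leibniz]
      exact Ideal.add_mem _ (Ideal.mul_mem_mul hv (EM w)) (Ideal.mul_mem_mul hw (EM v))
    · intro v w hv hw
      rw [map_add]; exact Ideal.add_mem _ hv hw
  have E1 : ∀ v ∈ M, E v - C N.det * v ∈ P ⊔ M ^ 2 := by
    intro v hv
    let g : Fin (m+2) → ℂ := fun j => eval p (pderiv j v)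
    let w : Fin (m+2) → ℂ := Matrix.vecMul g N⁻¹
    have hw : ∀ j, w 0 * a j + w 1 * b j
        + ∑ i : Fin m, w i.succ.succ * eval p (pderiv j (s i)) = eval p (pderiv j v) := by
      intro j
      have h1 : Matrix.vecMul w N = g := by
        rw [Matrix.vecMul_vecMul, Matrix.nonsing_inv_mul _ (isUnit_iff_ne_zero.2 hab),
          Matrix.vecMul_one]
      have h2 := congrFun h1 j
      simp only [Matrix.vecMul, dotProduct, Fin.sum_univ_succ] at h2
      rw [← add_assoc] at h2
      exact h2
    let q : PA m := ∑ i : Fin m, C (w i.succ.succ) * (s i - C (μ i))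
    have hq : q ∈ P := Ideal.sum_mem _ fun i _ => Ideal.mul_mem_left _ _ (hsP i)
    let e : PA m := v - C (w 0) * y - C (w 1) * z - q
    have he : e ∈ M ^ 2 := by
      apply sq_mem_of_grad
      · have h1 : eval p v = 0 := hv
        have h2 : eval p q = 0 := hPM hq
        have h3 : eval p y = 0 := hyM
        have h4 : eval p z = 0 := hzM
        simp [e, h1, h2, h3, h4]
      · intro j
        simp only [e, q, map_sub, map_sum, hy, hz, Derivation.leibniz, lin_grad, ← hw j]
        simp
        ring
    have hv' : v = e + C (w 0) * y + C (w 1) * z + q := by simp only [e]; ring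
    have hEC : ∀ (c : ℂ) u, E (C c * u) = C c * E u := by
      intro c u
      rw [Derivation.leibniz, ← algebraMap_eq, Derivation.map_algebraMap]
      simp
    have : E v - C N.det * v = (E e - C N.det * e) + C (w 0) * (E y - C N.det * y)
        + C (w 1) * (E z - C N.det * z) + (E q - C N.det * q) := by
      rw [hv']
      simp only [map_add, hEC]
      ring
    rw [this]
    refine Ideal.add_mem _ (Ideal.add_mem _ (Ideal.add_mem _ ?_ (Ideal.mul_mem_left _ _ Ey))
      (Ideal.mul_mem_left _ _ Ez)) ?_
    · exact Ideal.mem_sup_right (Ideal.sub_mem _ (EM2 e he) (Ideal.mul_mem_left _ _ he))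
    · exact Ideal.mem_sup_left (Ideal.sub_mem _ (EP q hq) (Ideal.mul_mem_left _ _ hq))
  have hmul : ∀ (i : ℕ) (j : ℕ) (v w : PA m), v ∈ M ^ i → w ∈ P ⊔ M ^ j →
      v * w ∈ P ⊔ M ^ (i + j) := by
    intro i j v w hv hw
    obtain ⟨c, hc, d, hd, rfl⟩ := Submodule.mem_sup.1 hw
    rw [mul_add]
    refine Ideal.add_mem _ (Ideal.mem_sup_left (Ideal.mul_mem_left _ _ hc))
      (Ideal.mem_sup_right ?_)
    rw [pow_add]; exact Ideal.mul_mem_mul hv hd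
  have Ek : ∀ k : ℕ, ∀ v ∈ M ^ (k+1), E v - C N.det * ((k+1 : ℕ) : PA m) * v ∈ P ⊔ M ^ (k+2) := by
    intro k
    induction k with
    | zero => intro v hv; simpa using E1 v (by simpa using hv)
    | succ k ih =>
      intro v hv
      rw [pow_succ] at hv
      refine Submodule.mul_induction_on hv ?_ ?_
      · intro v hv w hw
        have h1 := hmul (k+1) 2 v _ hv (E1 w hw)
        have h2 := hmul 1 (k+2) w _ (by simpa using hw) (ih v hv)
        rw [show 1 + (k+2) = k+1+2 by ring] at h2
        convert Ideal.add_mem _ h1 h2 using 1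
        rw [Derivation.leibniz, smul_eq_mul, smul_eq_mul]
        push_cast
        ring
      · intro v w hv hw
        convert Ideal.add_mem _ hv hw using 1
        rw [map_add]; ring
  have main : ∀ k : ℕ, J ≤ P ⊔ M ^ (k+1) := by
    intro k
    induction k with
    | zero => simpa using hJM.trans le_sup_right
    | succ k ih =>
      intro u hu
      obtain ⟨c, hc, d, hd, rfl⟩ := Submodule.mem_sup.1 (ih hu)
      have h1 : E (c + d) ∈ P ⊔ M ^ (k+2) := by
        rw [E_def]
        have hh : ∀ r, hamD s r (c + d) ∈ P ⊔ M ^ (k+1) := fun r => by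
          apply ih; rw [hamD_apply]; exact hJ _ hu r
        have h1 := hmul 1 (k+1) y _ (by simpa using hyM) (hh z)
        have h2 := hmul 1 (k+1) z _ (by simpa using hzM) (hh y)
        rw [show 1 + (k+1) = k+2 by ring] at h1 h2
        exact Ideal.sub_mem _ h1 h2
      have h2 : C N.det * ((k+1 : ℕ) : PA m) * d ∈ P ⊔ M ^ (k+2) := by
        convert Ideal.sub_mem _ (Ideal.sub_mem _ h1 (Ideal.mem_sup_left (EP c hc))) (Ek k d hd)
          using 1
        rw [map_add]; ring
      have h3 := Ideal.mul_mem_left _ (C (N.det * ((k+1 : ℕ) : ℂ))⁻¹) h2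
      have h4 : C (N.det * ((k+1 : ℕ) : ℂ))⁻¹ * (C N.det * ((k+1 : ℕ) : PA m) * d) = d := by
        rw [← map_natCast (C : ℂ →+* PA m), ← C_mul, ← mul_assoc, ← C_mul, inv_mul_cancel₀,
          C_1, one_mul]
        exact mul_ne_zero hab (by exact_mod_cast Nat.succ_ne_zero k)
      rw [h4] at h3
      exact Ideal.add_mem _ (Ideal.mem_sup_left hc) h3
  -- Krull intersection in the domain `A / P`
  intro u hu
  rw [← Ideal.Quotient.eq_zero_iff_mem]
  have hbot := Ideal.iInf_pow_eq_bot_of_isDomain (M.map (Ideal.Quotient.mk P)) (by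
    intro h
    have h1 := Ideal.comap_map_of_surjective _ (Ideal.Quotient.mk_surjective (I := P)) M
    rw [h, ← RingHom.ker_eq_comap_bot, Ideal.mk_ker, sup_eq_left.2 hPM, Ideal.comap_top] at h1
    exact RingHom.ker_ne_top (eval p) h1.symm)
  rw [← Ideal.mem_bot, ← hbot, Ideal.mem_iInf]
  intro k
  obtain ⟨c, hc, d, hd, rfl⟩ := Submodule.mem_sup.1 (main k hu)
  rw [map_add, Ideal.Quotient.eq_zero_iff_mem.2 hc, zero_add, ← Ideal.map_pow]
  exact Ideal.mem_map_of_mem _ (Ideal.pow_le_pow_right (Nat.le_succ k) hd)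

theorem statement_19 {m : ℕ} (hm : 1 ≤ m)
    (s : Fin m → PA m)
    (hind : AlgebraicIndependent ℂ s)
    (μ : Fin m → ℂ)
    (P : Ideal (PA m)) (hP : P = Ideal.span (Set.range fun i => s i - C (μ i)))
    (hPprime : P.IsPrime) :
    -- P is a Poisson (prime) ideal
    (∀ u ∈ P, ∀ r : PA m, pbr s (fun _ => 1) u r ∈ P) ∧
    -- X is nonsingular iff A/P is Poisson simple
    ((∀ p : Fin (m + 2) → ℂ, (∀ i, eval p (s i) = μ i) →
        Matrix.rank (Matrix.of fun i j => eval p (pderiv j (s i))) = m) ↔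
     (∀ J : Ideal (PA m), P ≤ J →
        (∀ u ∈ J, ∀ r : PA m, pbr s (fun _ => 1) u r ∈ J) → J = P ∨ J = ⊤)) := by
  refine ⟨?_, ?_, ?_⟩
  · intro u hu r
    rw [← hamD_apply, hP]
    exact P_poisson s μ r u (hP ▸ hu)
  · intro hns J hPJ hJ
    by_cases hJt : J = ⊤
    · exact Or.inr hJt
    · exact Or.inl (le_antisymm (nonsing_dir s μ P hP hPprime hns J hPJ hJ hJt) hPJ)
  · intro hs p hp
    subst hP
    exact singular_dir s μ hs p hp

end
end
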